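/- arXiv:1912.11298 — 3 statements merged into one kernel-verified Lean document; each statement's English description precedes it below -/
import Mathlib

section
/- Let K ⊂ ℂ be a compact set and let h be a real-analytic function on an open neighborhood of K, with 0 ∈ K. Then for each f ∈ L¹(ℝ^d) there exists g ∈ L¹(ℝ^d) such that h(f̂(y)) = ĝ(y) + h(0) for every y ∈ ℝ^d with f̂(y) ∈ K. -/
open MeasureTheory Real
open scoped FourierTransform

open Filter Topology

section WienerAlgebra

variable {E : Type*} [NormedAddCommGroup E] [InnerProductSpace ℝ E] [FiniteDimensional ℝ E]
  [MeasurableSpace E] [BorelSpace E]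

/-- `F` is the Fourier transform of an integrable function of `L¹` norm at most `c`. -/
def FourierNormLE (F : E → ℂ) (c : ℝ) : Prop :=
  ∃ g : Lp ℂ 1 (volume : Measure E), ‖g‖ ≤ c ∧ ∀ y, 𝓕 (g : E → ℂ) y = F y

/-- The Fourier transform at a frequency, as a continuous linear functional on `L¹`. -/
noncomputable def fourierAt (y : E) : Lp ℂ 1 (volume : Measure E) →L[ℂ] ℂ :=
  (BoundedContinuousFunction.evalCLM ℂ y).comp (Lp.fourierTransformCLM E ℂ)

theorem fourierAt_apply (y : E) (g : Lp ℂ 1 (volume : Measure E)) :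
    fourierAt y g = 𝓕 (g : E → ℂ) y := rfl

theorem MeasureTheory.Integrable.fourier_toL1 {f : E → ℂ} (hf : Integrable f) (y : E) :
    𝓕 (hf.toL1 f : E → ℂ) y = 𝓕 f y :=
  Real.fourier_congr_ae hf.coeFn_toL1 y

namespace FourierNormLE

variable {F G : E → ℂ} {b c : ℝ}

theorem of_integrable {g : E → ℂ} (hg : Integrable g) (hc : ∫ x, ‖g x‖ ≤ c)
    (hF : ∀ y, 𝓕 g y = F y) : FourierNormLE F c :=
  ⟨hg.toL1 g, by rwa [L1.norm_of_fun_eq_integral_norm], fun y => (hg.fourier_toL1 y).trans (hF y)⟩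

theorem exists_integrable (hF : FourierNormLE F c) :
    ∃ g : E → ℂ, Integrable g ∧ ∫ x, ‖g x‖ ≤ c ∧ ∀ y, 𝓕 g y = F y := by
  obtain ⟨g, hg, hgF⟩ := hF
  exact ⟨g, L1.integrable_coeFn g, (L1.norm_eq_integral_norm g).symm.trans_le hg, hgF⟩

theorem nonneg (hF : FourierNormLE F c) : 0 ≤ c := by
  obtain ⟨g, hg, -⟩ := hF
  exact (norm_nonneg g).trans hg

theorem mono (hF : FourierNormLE F b) (hbc : b ≤ c) : FourierNormLE F c := by
  obtain ⟨g, hg, hgF⟩ := hF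
  exact ⟨g, hg.trans hbc, hgF⟩

theorem norm_apply_le (hF : FourierNormLE F c) (y : E) : ‖F y‖ ≤ c := by
  obtain ⟨g, hg, hgc, hgF⟩ := hF.exists_integrable
  rw [← hgF]
  exact (VectorFourier.norm_fourierIntegral_le_integral_norm _ _ _ _ _).trans hgc

theorem add (hF : FourierNormLE F b) (hG : FourierNormLE G c) :
    FourierNormLE (fun y => F y + G y) (b + c) := by
  obtain ⟨f, hf, hfF⟩ := hF
  obtain ⟨g, hg, hgG⟩ := hG
  refine ⟨f + g, (norm_add_le f g).trans (add_le_add hf hg), fun y => ?_⟩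
  rw [← fourierAt_apply, map_add, fourierAt_apply, fourierAt_apply, hfF, hgG]

theorem const_mul (a : ℂ) (hF : FourierNormLE F c) :
    FourierNormLE (fun y => a * F y) (‖a‖ * c) := by
  obtain ⟨f, hf, hfF⟩ := hF
  refine ⟨a • f, by rw [norm_smul]; gcongr, fun y => ?_⟩
  rw [← fourierAt_apply, map_smul, fourierAt_apply, hfF, smul_eq_mul]

theorem tsum {F : ℕ → E → ℂ} {c : ℕ → ℝ} (hF : ∀ n, FourierNormLE (F n) (c n))
    (hc : Summable c) : FourierNormLE (fun y => ∑' n, F n y) (∑' n, c n) := by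
  choose g hg hgF using hF
  have hs : Summable fun n => ‖g n‖ := hc.of_nonneg_of_le (fun n => norm_nonneg _) hg
  refine ⟨∑' n, g n, (norm_tsum_le_tsum_norm hs).trans (hs.tsum_le_tsum hg hc), fun y => ?_⟩
  rw [← fourierAt_apply, (fourierAt y).map_tsum hs.of_norm]
  simp_rw [fourierAt_apply, hgF]

protected theorem star (hF : FourierNormLE F c) : FourierNormLE (fun y => starRingEnd ℂ (F y)) c := by
  obtain ⟨g, hg, hgc, hgF⟩ := hF.exists_integrable
  refine of_integrable (g := fun x => starRingEnd ℂ (g (-x)))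
    (Complex.conjCLE.toContinuousLinearMap.integrable_comp hg.comp_neg) ?_ fun y => ?_
  · simpa [integral_neg_eq_self (fun x => ‖g x‖)] using hgc
  · rw [← hgF, Real.fourier_eq, Real.fourier_eq, ← integral_conj,
      ← integral_neg_eq_self (fun x => starRingEnd ℂ (𝐞 (-inner ℝ x y) • g x))]
    congr 1 with x
    simp [Circle.smul_def, ← Circle.coe_inv_eq_conj, AddChar.map_neg_eq_inv]

theorem re (hF : FourierNormLE F c) : FourierNormLE (fun y => ((F y).re : ℂ)) c := by
  convert (hF.add hF.star).const_mul (1 / 2) using 1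
  · ext y
    rw [Complex.re_eq_add_conj]; ring
  · simp only [norm_div, norm_one, RCLike.norm_ofNat]
    ring

theorem im (hF : FourierNormLE F c) : FourierNormLE (fun y => ((F y).im : ℂ)) c := by
  convert (hF.const_mul (-Complex.I)).re using 1
  · ext y; simp
  · simp

theorem comp_add_right (hF : FourierNormLE F c) (a : E) :
    FourierNormLE (fun y => F (y + a)) c := by
  obtain ⟨g, hg, hgc, hgF⟩ := hF.exists_integrable
  refine of_integrable (g := fun x => 𝐞 (-inner ℝ x a) • g x)
    ((Real.fourierIntegral_convergent_iff a).2 hg) (by simpa using hgc) fun y => ?_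
  rw [← hgF, Real.fourier_eq, Real.fourier_eq]
  congr 1 with x
  rw [smul_smul, ← AddChar.map_add_eq_mul, inner_add_right, neg_add]

theorem comp_smul (hF : FourierNormLE F c) {s : ℝ} (hs : s ≠ 0) :
    FourierNormLE (fun y => F (s • y)) c := by
  obtain ⟨g, hg, hgc, hgF⟩ := hF.exists_integrable
  have hs' : |s ^ Module.finrank ℝ E| ≠ 0 := by positivity
  refine of_integrable (g := fun x => |s ^ Module.finrank ℝ E|⁻¹ • g (s⁻¹ • x))
    ((hg.comp_smul (inv_ne_zero hs)).smul (|s ^ Module.finrank ℝ E|⁻¹ : ℝ)) ?_ fun y => ?_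
  · simp_rw [norm_smul, norm_inv, norm_abs_eq_norm, Real.norm_eq_abs]
    rw [integral_const_mul, Measure.integral_comp_inv_smul volume (fun x => ‖g x‖), smul_eq_mul,
      inv_mul_cancel_left₀ hs']
    exact hgc
  · rw [← hgF, Real.fourier_eq, Real.fourier_eq]
    have := Measure.integral_comp_inv_smul volume (fun x => 𝐞 (-inner ℝ x (s • y)) • g x) s
    rw [← inv_smul_eq_iff₀ hs', ← integral_smul] at this
    rw [← this]
    congr 1 with x
    rw [smul_comm, inner_smul_left, inner_smul_right]
    simp [hs]

end FourierNormLE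

/-- Translation of an integrable function by `t`. -/
noncomputable def translateL1 (t : E) (v : Lp ℂ 1 (volume : Measure E)) :
    Lp ℂ 1 (volume : Measure E) :=
  DomAddAct.mk (-t) +ᵥ v

theorem continuous_translateL1 (v : Lp ℂ 1 (volume : Measure E)) :
    Continuous fun t => translateL1 t v := by
  unfold translateL1
  have hmk : Continuous fun t : E => DomAddAct.mk (-t) :=
    DomAddAct.continuous_mk.comp continuous_neg
  have : Fact ((1 : ENNReal) ≠ ⊤) := ⟨ENNReal.one_ne_top⟩
  exact hmk.vadd continuous_const

theorem norm_translateL1 (t : E) (v : Lp ℂ 1 (volume : Measure E)) :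
    ‖translateL1 t v‖ = ‖v‖ :=
  DomAddAct.norm_vadd_Lp _ _

theorem translateL1_zero (v : Lp ℂ 1 (volume : Measure E)) : translateL1 0 v = v := by
  simp [translateL1]

theorem fourierAt_translateL1 (y t : E) (v : Lp ℂ 1 (volume : Measure E)) :
    fourierAt y (translateL1 t v) = 𝐞 (-inner ℝ t y) • fourierAt y v := by
  rw [fourierAt_apply, translateL1, Real.fourier_congr_ae (DomAddAct.vadd_Lp_ae_eq _ v)]
  have := congrFun (VectorFourier.fourierIntegral_comp_add_right 𝐞 volume (innerₗ E) v (-t)) y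
  convert this using 2
  · refine congrArg (fun g : E → ℂ => 𝓕 g y) (funext fun x => ?_)
    simp [add_comm]
  · simp
  · rfl

theorem FourierNormLE.dilate_mul {u : E → ℂ} (hu : Integrable u) (s : ℝ)
    (v : Lp ℂ 1 (volume : Measure E)) (a : ℂ) :
    FourierNormLE (fun y => 𝓕 u (s • y) * 𝓕 (v : E → ℂ) y - a * ((∫ t, u t) * 𝓕 (v : E → ℂ) y))
      (∫ t, ‖u t‖ * ‖translateL1 (s • t) v - a • v‖) := by
  have hcont : Continuous fun t : E => translateL1 (s • t) v - a • v :=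
    ((continuous_translateL1 v).comp (continuous_const_smul s)).sub continuous_const
  have hint : Integrable fun t => u t • (translateL1 (s • t) v - a • v) := by
    refine (hu.norm.mul_const (‖v‖ + ‖a • v‖)).mono'
      (hu.aestronglyMeasurable.smul hcont.aestronglyMeasurable) (ae_of_all _ fun t => ?_)
    rw [norm_smul]
    gcongr
    exact (norm_sub_le _ _).trans_eq (by rw [norm_translateL1])
  refine ⟨∫ t, u t • (translateL1 (s • t) v - a • v), ?_, fun y => ?_⟩
  · refine (norm_integral_le_integral_norm _).trans_eq ?_
    simp_rw [norm_smul]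
  · beta_reduce
    rw [← fourierAt_apply, ← ContinuousLinearMap.integral_comp_comm _ hint, Real.fourier_eq u, ← integral_mul_const, ← integral_mul_const, ← integral_const_mul,
      ← integral_sub]
    · congr 1 with t
      rw [map_smul, map_sub, map_smul, fourierAt_translateL1, fourierAt_apply, inner_smul_left, inner_smul_right]
      simp only [Circle.smul_def, smul_eq_mul, conj_trivial]
      ring
    · exact ((Real.fourierIntegral_convergent_iff _).2 hu).mul_const _
    · exact (hu.mul_const _).const_mul _

theorem FourierNormLE.mul {F G : E → ℂ} {b c : ℝ} (hF : FourierNormLE F b)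
    (hG : FourierNormLE G c) : FourierNormLE (fun y => F y * G y) (b * c) := by
  obtain ⟨u, hu, hub, huF⟩ := hF.exists_integrable
  obtain ⟨v, hv, hvG⟩ := hG
  have := dilate_mul hu 1 v 0
  simp only [one_smul, zero_smul, sub_zero, zero_mul, norm_translateL1, huF, hvG,
    integral_mul_const] at this
  exact this.mono (mul_le_mul hub hv (norm_nonneg _)
    (hub.trans' (integral_nonneg fun _ => norm_nonneg _)))

/-- Dilating a Fourier transform towards a constant makes its deviation from that constant small
relative to any fixed Fourier transform. -/
theorem exists_fourierNormLE_dilate_sub_mul {u v : E → ℂ} (hu : Integrable u) (hv : Integrable v)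
    {ε : ℝ} (hε : 0 < ε) :
    ∃ s : ℝ, 0 < s ∧ FourierNormLE (fun y => (𝓕 u (s • y) - 𝓕 u 0) * 𝓕 v y) ε := by
  set w := hv.toL1 v
  have htend : Tendsto (fun s : ℝ => ∫ t, ‖u t‖ * ‖translateL1 (s • t) w - (1 : ℂ) • w‖)
      (𝓝[>] 0) (𝓝 (∫ _ : E, (0 : ℝ))) := by
    have hcont (s : ℝ) : Continuous fun t : E => translateL1 (s • t) w - (1 : ℂ) • w :=
      ((continuous_translateL1 w).comp (continuous_const_smul s)).sub continuous_const
    refine tendsto_integral_filter_of_dominated_convergence (fun t => ‖u t‖ * (‖w‖ + ‖w‖))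
      (Eventually.of_forall fun s =>
        hu.aestronglyMeasurable.norm.mul (hcont s).norm.aestronglyMeasurable)
      (Eventually.of_forall fun s => ae_of_all _ fun t => ?_) (hu.norm.mul_const _)
      (ae_of_all _ fun t => ?_)
    · rw [norm_mul, norm_norm, norm_norm, one_smul]
      gcongr
      exact (norm_sub_le _ _).trans_eq (by rw [norm_translateL1])
    · have hc : Continuous fun s : ℝ => ‖u t‖ * ‖translateL1 (s • t) w - (1 : ℂ) • w‖ :=
        continuous_const.mul (((continuous_translateL1 w).comp
          (continuous_id.smul continuous_const)).sub continuous_const).norm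
      refine (hc.tendsto' 0 0 ?_).mono_left nhdsWithin_le_nhds
      simp [translateL1_zero]
  rw [integral_zero] at htend
  obtain ⟨s, hsε, hs⟩ := ((htend.eventually (ge_mem_nhds hε)).and self_mem_nhdsWithin).exists
  refine ⟨s, hs, ?_⟩
  have h0 : 𝓕 u 0 = ∫ t, u t := by simp [Real.fourier_eq]
  convert (FourierNormLE.dilate_mul hu s w 1).mono hsε using 2 with y
  rw [h0, hv.fourier_toL1]
  ring

/-- A smooth bump function is the Fourier transform of an integrable function. -/
theorem ContDiffBump.exists_integrable_fourier_eq {y₀ : E} (χ : ContDiffBump y₀) :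
    ∃ g : E → ℂ, Integrable g ∧ ∀ y, 𝓕 g y = (χ y : ℂ) := by
  have hsupp : HasCompactSupport fun y => (χ y : ℂ) :=
    χ.hasCompactSupport.comp_left Complex.ofReal_zero
  let φ : SchwartzMap E ℂ :=
    hsupp.toSchwartzMap (Complex.ofRealCLM.contDiff.comp χ.contDiff)
  refine ⟨(𝓕⁻ φ : SchwartzMap E ℂ), SchwartzMap.integrable _, fun y => ?_⟩
  rw [← SchwartzMap.fourier_coe, FourierTransform.fourier_fourierInv_eq]
  rfl

theorem ContinuousMultilinearMap.apply_diag_succ {n : ℕ}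
    (m : ContinuousMultilinearMap ℝ (fun _ : Fin (n + 1) => ℂ) ℂ) (z : ℂ) :
    m (fun _ => z) = (z.re : ℂ) * m.curryLeft 1 (fun _ => z) +
      (z.im : ℂ) * m.curryLeft Complex.I (fun _ => z) := by
  have hdiag : m (fun _ => z) = m.curryLeft z (fun _ => z) := by
    rw [m.curryLeft_apply]
    congr 1 with i
    refine Fin.cases ?_ (fun _ => ?_) i <;> simp
  have hz : z = z.re • (1 : ℂ) + z.im • Complex.I := by simp
  rw [hdiag]
  conv_lhs => rw [hz]
  rw [map_add, map_smul, map_smul]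
  simp

theorem ContinuousMultilinearMap.norm_curryLeft_le {n : ℕ}
    (m : ContinuousMultilinearMap ℝ (fun _ : Fin (n + 1) => ℂ) ℂ) {w : ℂ} (hw : ‖w‖ = 1) :
    ‖m.curryLeft w‖ ≤ ‖m‖ := by
  simpa [hw] using m.curryLeft.le_opNorm w

namespace FourierNormLE

variable {F G : E → ℂ} {b c : ℝ}

theorem mul_multilinear_diag (hF : FourierNormLE F c) {n : ℕ}
    (m : ContinuousMultilinearMap ℝ (fun _ : Fin n => ℂ) ℂ) (hG : FourierNormLE G b) :
    FourierNormLE (fun y => G y * m (fun _ => F y)) (b * (‖m‖ * (2 * c) ^ n)) := by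
  have hc := hF.nonneg
  induction n generalizing G b with
  | zero =>
    have hb := hG.nonneg
    convert (hG.const_mul (m 0)).mono (c := b * (‖m‖ * (2 * c) ^ 0)) ?_ using 2 with y
    · rw [mul_comm, Subsingleton.elim (fun _ : Fin 0 => F y) 0]
    · rw [mul_comm, pow_zero, mul_one]
      gcongr
      simpa only [Finset.univ_eq_empty, Finset.prod_empty, mul_one] using m.le_opNorm 0
  | succ n ih =>
    have hb := hG.nonneg
    have h := (ih (m.curryLeft 1) (hG.mul hF.re)).add (ih (m.curryLeft Complex.I) (hG.mul hF.im))
    convert h.mono (c := b * (‖m‖ * (2 * c) ^ (n + 1))) ?_ using 2 with y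
    · rw [m.apply_diag_succ]
      ring
    · calc b * c * (‖m.curryLeft 1‖ * (2 * c) ^ n)
            + b * c * (‖m.curryLeft Complex.I‖ * (2 * c) ^ n)
          ≤ b * c * (‖m‖ * (2 * c) ^ n) + b * c * (‖m‖ * (2 * c) ^ n) := by
            gcongr <;> exact m.norm_curryLeft_le (by simp)
        _ = b * (‖m‖ * (2 * c) ^ (n + 1)) := by ring

theorem multilinear_diag (hF : FourierNormLE F c) {n : ℕ}
    (m : ContinuousMultilinearMap ℝ (fun _ : Fin (n + 1) => ℂ) ℂ) :
    FourierNormLE (fun y => m (fun _ => F y)) (‖m‖ * (2 * c) ^ (n + 1)) := by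
  have hc := hF.nonneg
  have h := (hF.mul_multilinear_diag (m.curryLeft 1) hF.re).add
    (hF.mul_multilinear_diag (m.curryLeft Complex.I) hF.im)
  convert h.mono (c := ‖m‖ * (2 * c) ^ (n + 1)) ?_ using 2 with y
  · rw [m.apply_diag_succ]
  · calc c * (‖m.curryLeft 1‖ * (2 * c) ^ n) + c * (‖m.curryLeft Complex.I‖ * (2 * c) ^ n)
        ≤ c * (‖m‖ * (2 * c) ^ n) + c * (‖m‖ * (2 * c) ^ n) := by
          gcongr <;> exact m.norm_curryLeft_le (by simp)
      _ = ‖m‖ * (2 * c) ^ (n + 1) := by ring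

end FourierNormLE

/-- Real-analytic functions operate on Fourier transforms of small `L¹` norm. -/
theorem AnalyticAt.exists_fourierNormLE_comp {h : ℂ → ℂ} {z : ℂ} (hh : AnalyticAt ℝ h z) :
    ∃ ε > 0, ∀ F : E → ℂ, FourierNormLE F ε →
      ∃ c, FourierNormLE (fun y => h (z + F y) - h z) c := by
  obtain ⟨p, r, hp⟩ := hh
  obtain ⟨ρ, hρ, hρr⟩ := ENNReal.lt_iff_exists_nnreal_btwn.1 hp.r_pos
  have hρ : 0 < (ρ : ℝ) := by exact_mod_cast hρ
  refine ⟨ρ / 2, by positivity, fun F hF => ?_⟩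
  have hsum : Summable fun n => ‖p (n + 1)‖ * (2 * (ρ / 2 : ℝ)) ^ (n + 1) := by
    rw [mul_div_cancel₀ _ two_ne_zero]
    exact (summable_nat_add_iff 1).2 (p.summable_norm_mul_pow (hρr.trans_le hp.r_le))
  refine ⟨∑' n, ‖p (n + 1)‖ * (2 * (ρ / 2 : ℝ)) ^ (n + 1), ?_⟩
  convert FourierNormLE.tsum (fun n => hF.multilinear_diag (p (n + 1))) hsum using 2 with y
  have hy : F y ∈ Metric.eball (0 : ℂ) r := by
    refine lt_trans ?_ hρr
    rw [edist_zero_right, ← ofReal_norm, ENNReal.ofReal_lt_coe_iff (norm_nonneg _)]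
    linarith [hF.norm_apply_le y]
  have hs := hp.hasSum hy
  rw [← hs.tsum_eq, hs.summable.tsum_eq_zero_add, hp.coeff_zero, add_sub_cancel_left]

theorem fourierNormLE_fourier {f : E → ℂ} (hf : Integrable f) :
    FourierNormLE (𝓕 f) (∫ x, ‖f x‖) :=
  .of_integrable hf le_rfl fun _ => rfl

theorem exists_fourierNormLE_eventuallyEq_sub {f : E → ℂ} (hf : Integrable f) (y₀ : E) {ε : ℝ}
    (hε : 0 < ε) :
    ∃ F : E → ℂ, FourierNormLE F ε ∧ ∀ᶠ y in 𝓝 y₀, F y = 𝓕 f y - 𝓕 f y₀ := by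
  obtain ⟨u, hu, -, huf⟩ := ((fourierNormLE_fourier hf).comp_add_right y₀).exists_integrable
  let χ : ContDiffBump (0 : E) := ⟨1, 2, one_pos, one_lt_two⟩
  obtain ⟨v, hv, hvχ⟩ := χ.exists_integrable_fourier_eq
  obtain ⟨s, hs, hsF⟩ := exists_fourierNormLE_dilate_sub_mul hu hv hε
  refine ⟨_, (hsF.comp_smul (inv_ne_zero hs.ne')).comp_add_right (-y₀), ?_⟩
  have ht : Tendsto (fun y : E => s⁻¹ • (y + -y₀)) (𝓝 y₀) (𝓝 0) :=
    Continuous.tendsto' (by fun_prop) _ _ (by simp)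
  filter_upwards [ht.eventually χ.eventuallyEq_one] with y hy
  rw [hvχ, hy, huf, huf, smul_inv_smul₀ hs.ne']
  simp

theorem exists_fourierNormLE_eventuallyEq_cocompact {f : E → ℂ} (hf : Integrable f) {ε : ℝ}
    (hε : 0 < ε) :
    ∃ F : E → ℂ, FourierNormLE F ε ∧ ∀ᶠ y in cocompact E, F y = 𝓕 f y := by
  let χ : ContDiffBump (0 : E) := ⟨1, 2, one_pos, one_lt_two⟩
  obtain ⟨u, hu, huχ⟩ := χ.exists_integrable_fourier_eq
  obtain ⟨s, hs, hsF⟩ := exists_fourierNormLE_dilate_sub_mul hu hf hε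
  refine ⟨_, (hsF.const_mul (-1)).mono (by simp), ?_⟩
  filter_upwards [(tendsto_norm_cocompact_atTop (E := E)).eventually_ge_atTop (s⁻¹ * 2)] with y hy
  have hsy : 2 ≤ ‖s • y‖ := by
    rw [norm_smul, Real.norm_of_nonneg hs.le]
    rwa [inv_mul_le_iff₀ hs] at hy
  have h0 : χ (s • y) = 0 := χ.zero_of_le_dist (by simpa using hsy)
  have h1 : χ 0 = 1 := χ.eventuallyEq_one.self_of_nhds
  rw [huχ, huχ, h0, h1]
  simp

/-- Real-analytic functions operate locally on Fourier transforms. -/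
theorem AnalyticAt.exists_fourierNormLE_eventuallyEq_comp_fourier {h : ℂ → ℂ} {f : E → ℂ}
    (hf : Integrable f) {y₀ : E} (hh : AnalyticAt ℝ h (𝓕 f y₀)) :
    ∃ (F : E → ℂ) (c : ℝ), FourierNormLE F c ∧
      ∀ᶠ y in 𝓝 y₀, h (𝓕 f y) = h (𝓕 f y₀) + F y := by
  obtain ⟨ε, hε, hcomp⟩ := hh.exists_fourierNormLE_comp (E := E)
  obtain ⟨F, hF, hFf⟩ := exists_fourierNormLE_eventuallyEq_sub hf y₀ hε
  obtain ⟨c, hc⟩ := hcomp F hF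
  refine ⟨_, c, hc, ?_⟩
  filter_upwards [hFf] with y hy
  simp [hy]

theorem AnalyticAt.exists_fourierNormLE_eventuallyEq_cocompact_comp_fourier {h : ℂ → ℂ}
    {f : E → ℂ} (hf : Integrable f) (hh : AnalyticAt ℝ h 0) :
    ∃ (F : E → ℂ) (c : ℝ), FourierNormLE F c ∧
      ∀ᶠ y in cocompact E, h (𝓕 f y) = F y + h 0 := by
  obtain ⟨ε, hε, hcomp⟩ := hh.exists_fourierNormLE_comp (E := E)
  obtain ⟨F, hF, hFf⟩ := exists_fourierNormLE_eventuallyEq_cocompact hf hε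
  obtain ⟨c, hc⟩ := hcomp F hF
  refine ⟨_, c, hc, ?_⟩
  filter_upwards [hFf] with y hy
  simp [hy]

/-- A function that agrees near `y₀` with a constant plus a Fourier transform, and on `T` with a
Fourier transform, agrees with a single Fourier transform on `T` and near `y₀`. -/
theorem exists_fourierNormLE_eqOn_union {H F G : E → ℂ} {a : ℂ} {b c : ℝ} {y₀ : E} {T : Set E}
    (hF : FourierNormLE F b) (hG : FourierNormLE G c) (hHG : Set.EqOn H G T) {δ : ℝ} (hδ : 0 < δ)
    (hδF : ∀ y ∈ Metric.ball y₀ (2 * δ), H y = a + F y) :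
    ∃ (F' : E → ℂ) (c' : ℝ), FourierNormLE F' c' ∧ Set.EqOn H F' (T ∪ Metric.ball y₀ δ) := by
  let χ : ContDiffBump y₀ := ⟨δ, 2 * δ, hδ, by linarith⟩
  obtain ⟨k, hk, hkχ⟩ := χ.exists_integrable_fourier_eq
  have hχ : FourierNormLE (fun y => (χ y : ℂ)) (∫ x, ‖k x‖) := .of_integrable hk le_rfl hkχ
  refine ⟨_, _, ((hχ.const_mul a).add (hχ.mul hF)).add (hG.add ((hχ.mul hG).const_mul (-1))),
    fun y hy => ?_⟩
  have hlocal : (χ y : ℂ) * H y = χ y * (a + F y) := by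
    by_cases hy' : y ∈ Metric.ball y₀ (2 * δ)
    · rw [hδF y hy']
    · rw [χ.zero_of_le_dist (by simpa using hy')]
      simp
  have hglobal : (1 - (χ y : ℂ)) * H y = (1 - χ y) * G y := by
    rcases hy with hy | hy
    · rw [hHG hy]
    · rw [χ.one_of_mem_closedBall (Metric.ball_subset_closedBall hy)]
      simp
  linear_combination hlocal + hglobal

theorem exists_integrable_comp_fourier_eq {K : Set ℂ} (hK : IsClosed K) (h0K : (0 : ℂ) ∈ K)
    {h : ℂ → ℂ} (hh : AnalyticOnNhd ℝ h K) {f : E → ℂ} (hf : Integrable f) :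
    ∃ g : E → ℂ, Integrable g ∧ ∀ y, 𝓕 f y ∈ K → h (𝓕 f y) = 𝓕 g y + h 0 := by
  obtain ⟨F, c, hF, hFf⟩ :=
    (hh 0 h0K).exists_fourierNormLE_eventuallyEq_cocompact_comp_fourier hf
  obtain ⟨C, hC, hCF⟩ := mem_cocompact.1 hFf
  have hcont : Continuous (𝓕 f) :=
    VectorFourier.fourierIntegral_continuous Real.continuous_fourierChar
      (innerSL ℝ).continuous₂ hf
  let H : E → ℂ := fun y => h (𝓕 f y) - h 0
  have hglue : ∀ (T : Set E) (G : E → ℂ) (b : ℝ), FourierNormLE G b → Set.EqOn H G T →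
      ∃ (G' : E → ℂ) (b' : ℝ), FourierNormLE G' b' ∧ Set.EqOn H G' (T ∪ C ∩ 𝓕 f ⁻¹' K) := by
    refine (hC.inter_right (hK.preimage hcont)).induction_on
      (p := fun S => ∀ (T : Set E) (G : E → ℂ) (b : ℝ), FourierNormLE G b → Set.EqOn H G T →
        ∃ (G' : E → ℂ) (b' : ℝ), FourierNormLE G' b' ∧ Set.EqOn H G' (T ∪ S)) ?_ ?_ ?_ ?_
    · exact fun T G b hG hHG => ⟨G, b, hG, by rwa [Set.union_empty]⟩
    · intro S S' hS ih T G b hG hHG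
      obtain ⟨G', b', hG', hHG'⟩ := ih T G b hG hHG
      exact ⟨G', b', hG', hHG'.mono (Set.union_subset_union_right T hS)⟩
    · intro S S' ih ih' T G b hG hHG
      obtain ⟨G₁, b₁, hG₁, hHG₁⟩ := ih T G b hG hHG
      obtain ⟨G₂, b₂, hG₂, hHG₂⟩ := ih' _ G₁ b₁ hG₁ hHG₁
      exact ⟨G₂, b₂, hG₂, by rwa [← Set.union_assoc]⟩
    · intro y₀ hy₀
      obtain ⟨F₀, c₀, hF₀, hfF₀⟩ :=
        (hh _ hy₀.2).exists_fourierNormLE_eventuallyEq_comp_fourier hf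
      obtain ⟨δ, hδ, hball⟩ := Metric.eventually_nhds_iff_ball.1 hfF₀
      refine ⟨Metric.ball y₀ (δ / 2), mem_nhdsWithin_of_mem_nhds
        (Metric.ball_mem_nhds _ (half_pos hδ)), fun T G b hG hHG => ?_⟩
      refine exists_fourierNormLE_eqOn_union (a := h (𝓕 f y₀) - h 0) hF₀ hG hHG (half_pos hδ)
        fun y hy => ?_
      rw [mul_div_cancel₀ _ two_ne_zero] at hy
      simp only [H, hball y hy]
      ring
  obtain ⟨G, b, hG, hHG⟩ := hglue Cᶜ F c hF fun y hy => sub_eq_of_eq_add (hCF hy)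
  obtain ⟨g, hg, -, hgG⟩ := hG.exists_integrable
  refine ⟨g, hg, fun y hy => ?_⟩
  have hyG : H y = G y := hHG (by by_cases hyC : y ∈ C <;> simp [hyC, hy])
  rw [hgG, ← hyG, sub_add_cancel]

end WienerAlgebra

/-- **Local Wiener–Levi theorem in `L¹(ℝ^d)`, case `0 ∈ K`.** Let `K ⊆ ℂ` be compact with
`0 ∈ K` and let `h` be real-analytic on an open neighborhood of `K`. Then for each
`f ∈ L¹(ℝ^d)` there is `g ∈ L¹(ℝ^d)` such that `h(f̂(y)) = ĝ(y) + h(0)` for every `y`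
with `f̂(y) ∈ K`. -/
theorem wiener_levi_local_L1_zero_mem {d : ℕ}
    (K : Set ℂ) (hK : IsCompact K) (h0K : (0 : ℂ) ∈ K)
    (h : ℂ → ℂ) (V : Set ℂ) (hV : IsOpen V) (hKV : K ⊆ V)
    (hh : AnalyticOnNhd ℝ h V)
    (f : EuclideanSpace ℝ (Fin d) → ℂ) (hf : Integrable f) :
    ∃ g : EuclideanSpace ℝ (Fin d) → ℂ, Integrable g ∧
      ∀ y : EuclideanSpace ℝ (Fin d), 𝓕 f y ∈ K → h (𝓕 f y) = 𝓕 g y + h 0 := by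
  exact exists_integrable_comp_fourier_eq hK.isClosed h0K (hh.mono hKV) hf
end

section
/- Let K ⊂ ℂ be a compact set with 0 ∉ K and let h be a real-analytic function on an open neighborhood of K. Then for each f ∈ L¹(ℝ^d) there exists g ∈ L¹(ℝ^d) such that h(f̂(y)) = ĝ(y) for every y ∈ ℝ^d with f̂(y) ∈ K. -/
open MeasureTheory Real
open scoped FourierTransform

open Filter Topology Set
open scoped Convolution ComplexConjugate

section

variable {V : Type*} [NormedAddCommGroup V] [InnerProductSpace ℝ V] [FiniteDimensional ℝ V]
  [MeasurableSpace V] [BorelSpace V]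

/-- On the set `s`, the function `F` agrees with the Fourier transform of an integrable function
of `L¹`-norm at most `c`. -/
def IsFourierOn (s : Set V) (c : ℝ) (F : V → ℂ) : Prop :=
  ∃ u : V → ℂ, Integrable u ∧ ∫ x, ‖u x‖ ≤ c ∧ ∀ y ∈ s, 𝓕 u y = F y

namespace IsFourierOn

variable {s t : Set V} {a b c : ℝ} {F G : V → ℂ}

theorem iff_exists_Lp : IsFourierOn s c F ↔
    ∃ u : Lp ℂ 1 (volume : Measure V), ‖u‖ ≤ c ∧ ∀ y ∈ s, Lp.fourierTransformCLM V ℂ u y = F y := by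
  constructor
  · rintro ⟨u, hu, huc, huF⟩
    refine ⟨hu.toL1 u, ?_, fun y hy ↦ ?_⟩
    · rw [L1.norm_eq_integral_norm]
      refine le_of_eq_of_le (integral_congr_ae ?_) huc
      filter_upwards [hu.coeFn_toL1] with x hx
      rw [hx]
    · rw [← huF y hy]
      exact Real.fourier_congr_ae hu.coeFn_toL1 y
  · rintro ⟨u, huc, huF⟩
    exact ⟨u, L1.integrable_coeFn u, (L1.norm_eq_integral_norm u).symm.trans_le huc, huF⟩

theorem nonneg (h : IsFourierOn s c F) : 0 ≤ c := by
  obtain ⟨u, -, hc, -⟩ := h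
  exact (integral_nonneg fun _ ↦ norm_nonneg _).trans hc

theorem norm_le (h : IsFourierOn s c F) {y : V} (hy : y ∈ s) : ‖F y‖ ≤ c := by
  obtain ⟨u, -, hc, hF⟩ := h
  rw [← hF y hy, Real.fourier_eq]
  refine (norm_integral_le_integral_norm _).trans ?_
  simpa only [Circle.norm_smul] using hc

theorem mono (h : IsFourierOn s c F) (hts : t ⊆ s) : IsFourierOn t c F := by
  obtain ⟨u, hu, hc, hF⟩ := h
  exact ⟨u, hu, hc, fun y hy ↦ hF y (hts hy)⟩

theorem mono_const (h : IsFourierOn s a F) (hab : a ≤ b) : IsFourierOn s b F := by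
  obtain ⟨u, hu, hc, hF⟩ := h
  exact ⟨u, hu, hc.trans hab, hF⟩

theorem congr (h : IsFourierOn s c F) (hFG : EqOn F G s) : IsFourierOn s c G := by
  obtain ⟨u, hu, hc, hF⟩ := h
  exact ⟨u, hu, hc, fun y hy ↦ (hF y hy).trans (hFG hy)⟩

theorem zero : IsFourierOn s 0 (fun _ ↦ 0) :=
  iff_exists_Lp.2 ⟨0, by simp, fun y _ ↦ by rw [map_zero]; rfl⟩

theorem add (hF : IsFourierOn s a F) (hG : IsFourierOn s b G) :
    IsFourierOn s (a + b) (fun y ↦ F y + G y) := by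
  obtain ⟨u, hu, huF⟩ := iff_exists_Lp.1 hF
  obtain ⟨v, hv, hvG⟩ := iff_exists_Lp.1 hG
  refine iff_exists_Lp.2 ⟨u + v, (norm_add_le _ _).trans (add_le_add hu hv), fun y hy ↦ ?_⟩
  rw [map_add, BoundedContinuousFunction.add_apply, huF y hy, hvG y hy]

theorem const_mul (hF : IsFourierOn s a F) (z : ℂ) :
    IsFourierOn s (‖z‖ * a) (fun y ↦ z * F y) := by
  obtain ⟨u, hu, huF⟩ := iff_exists_Lp.1 hF
  refine iff_exists_Lp.2 ⟨z • u, ?_, fun y hy ↦ ?_⟩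
  · rw [norm_smul]
    gcongr
  · rw [map_smul, BoundedContinuousFunction.smul_apply, huF y hy, smul_eq_mul]

theorem sum {ι : Type*} (S : Finset ι) {a : ι → ℝ} {F : ι → V → ℂ}
    (hF : ∀ i ∈ S, IsFourierOn s (a i) (F i)) :
    IsFourierOn s (∑ i ∈ S, a i) (fun y ↦ ∑ i ∈ S, F i y) := by
  classical
  induction S using Finset.induction_on with
  | empty => simpa using zero
  | insert i S hi ih =>
    simp only [Finset.sum_insert hi]
    exact (hF i (by simp)).add (ih fun j hj ↦ hF j (by simp [hj]))

theorem hasSum {a : ℕ → ℝ} {F : ℕ → V → ℂ} (hF : ∀ n, IsFourierOn s (a n) (F n))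
    (ha : Summable a) (hG : ∀ y ∈ s, HasSum (fun n ↦ F n y) (G y)) :
    IsFourierOn s (∑' n, a n) G := by
  choose u hu huF using fun n ↦ iff_exists_Lp.1 (hF n)
  have hsum : Summable u := .of_norm_bounded ha hu
  refine iff_exists_Lp.2 ⟨∑' n, u n, tsum_of_norm_bounded ha.hasSum hu, fun y hy ↦ ?_⟩
  have h1 := (hsum.hasSum.mapL (Lp.fourierTransformCLM V ℂ)).mapL
    (BoundedContinuousFunction.evalCLM ℂ y)
  refine h1.unique ?_
  simpa [← huF _ y hy] using hG y hy

theorem mul (hF : IsFourierOn s a F) (hG : IsFourierOn s b G) :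
    IsFourierOn s (a * b) (fun y ↦ F y * G y) := by
  have ha := hF.nonneg
  obtain ⟨u, hu, hua, huF⟩ := hF
  obtain ⟨v, hv, hvb, hvG⟩ := hG
  refine ⟨u ⋆[ContinuousLinearMap.mul ℂ ℂ] v, hu.integrable_convolution _ hv, ?_, fun y hy ↦ ?_⟩
  · have hle : ∀ x, ‖(u ⋆[ContinuousLinearMap.mul ℂ ℂ] v) x‖ ≤
        ((fun x ↦ ‖u x‖) ⋆[ContinuousLinearMap.mul ℝ ℝ] (fun x ↦ ‖v x‖)) x := fun x ↦ by
      refine (norm_integral_le_integral_norm _).trans_eq ?_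
      simp [convolution_def]
    calc ∫ x, ‖(u ⋆[ContinuousLinearMap.mul ℂ ℂ] v) x‖
        ≤ ∫ x, ((fun x ↦ ‖u x‖) ⋆[ContinuousLinearMap.mul ℝ ℝ] (fun x ↦ ‖v x‖)) x :=
          integral_mono (hu.integrable_convolution _ hv).norm
            (hu.norm.integrable_convolution _ hv.norm) hle
      _ = (∫ x, ‖u x‖) * ∫ x, ‖v x‖ := by
          rw [integral_convolution _ hu.norm hv.norm, ContinuousLinearMap.mul_apply']
      _ ≤ a * b := mul_le_mul hua hvb (integral_nonneg fun _ ↦ norm_nonneg _) ha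
  · rw [Real.fourier_mul_convolution_eq hu hv, huF y hy, hvG y hy]

theorem mul_pow (hG : IsFourierOn s a G) (hF : IsFourierOn s b F) (n : ℕ) :
    IsFourierOn s (a * b ^ n) (fun y ↦ G y * F y ^ n) := by
  induction n with
  | zero => simpa using hG
  | succ n ih => simpa only [pow_succ, mul_assoc] using ih.mul hF

theorem comp_conj (hF : IsFourierOn s a F) : IsFourierOn s a (fun y ↦ conj (F y)) := by
  obtain ⟨u, hu, hua, huF⟩ := hF
  refine ⟨fun x ↦ conj (u (-x)), ?_, ?_, fun y hy ↦ ?_⟩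
  · exact (Complex.conjCLE : ℂ →L[ℝ] ℂ).integrable_comp hu.comp_neg
  · simpa [integral_neg_eq_self (fun x ↦ ‖u x‖)] using hua
  · refine Eq.trans ?_ (congrArg conj (huF y hy))
    rw [Real.fourier_eq, Real.fourier_eq, ← integral_conj, ← integral_neg_eq_self]
    congr with x
    simp [Circle.smul_def, ← Circle.coe_inv_eq_conj, AddChar.map_neg_eq_inv]

theorem re (hF : IsFourierOn s a F) : IsFourierOn s a (fun y ↦ ((F y).re : ℂ)) := by
  convert (hF.add hF.comp_conj).const_mul (1 / 2) using 1
  · norm_num; ring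
  · ext y
    rw [Complex.add_conj]
    push_cast; ring

theorem im (hF : IsFourierOn s a F) : IsFourierOn s a (fun y ↦ ((F y).im : ℂ)) := by
  convert (hF.const_mul (-Complex.I)).re using 1
  · simp
  · ext y
    simp

theorem comp_smul_sub (hF : IsFourierOn s c F) {r : ℝ} (hr : 0 < r) (y₀ : V) :
    IsFourierOn {y | r • (y - y₀) ∈ s} c (fun y ↦ F (r • (y - y₀))) := by
  obtain ⟨u, hu, hc, huF⟩ := hF
  set N := r⁻¹ ^ Module.finrank ℝ V with hN
  have hN0 : 0 < N := by positivity
  have hscale {E : Type} [NormedAddCommGroup E] [NormedSpace ℝ E] (w : V → E) :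
      ∫ x, N • w (r⁻¹ • x) = ∫ x, w x := by
    rw [integral_smul, Measure.integral_comp_inv_smul_of_nonneg volume w hr.le, smul_smul,
      hN, ← _root_.mul_pow, inv_mul_cancel₀ hr.ne', one_pow, one_smul]
  refine ⟨fun x ↦ 𝐞 (inner ℝ x y₀) • N • u (r⁻¹ • x), ?_, ?_, fun y hy ↦ ?_⟩
  · have := (Real.fourierIntegral_convergent_iff (-y₀)).2
      ((hu.comp_smul (inv_ne_zero hr.ne')).smul N)
    simpa using this
  · refine le_of_eq_of_le ?_ hc
    rw [← hscale fun x ↦ ‖u x‖]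
    simp [abs_of_pos hN0]
  · refine Eq.trans ?_ (huF _ hy)
    rw [Real.fourier_eq, Real.fourier_eq, ← hscale fun x ↦ 𝐞 (-inner ℝ x (r • (y - y₀))) • u x]
    congr with x
    rw [smul_smul, ← AddChar.map_add_eq_mul, smul_comm]
    congr 3
    rw [inner_smul_left, inner_smul_right, inner_sub_right]
    simp
    field_simp
    ring

end IsFourierOn

theorem exists_isFourierOn_bump (y₀ : V) {U : Set V} (hU : U ∈ 𝓝 y₀) :
    ∃ φ : V → ℂ, ∃ c, IsFourierOn univ c φ ∧ (∀ᶠ y in 𝓝 y₀, φ y = 1) ∧ ∀ y ∉ U, φ y = 0 := by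
  obtain ⟨R, hR, hRU⟩ := Metric.nhds_basis_closedBall.mem_iff.1 hU
  let β : ContDiffBump y₀ := ⟨R / 2, R, by positivity, by linarith⟩
  let φ : V → ℂ := fun y ↦ (β y : ℂ)
  have hφc : HasCompactSupport φ := β.hasCompactSupport.comp_left (g := ((↑) : ℝ → ℂ)) (by simp)
  have hφs : ContDiff ℝ ((⊤ : ℕ∞) : WithTop ℕ∞) φ := Complex.ofRealCLM.contDiff.comp β.contDiff
  let Φ := hφc.toSchwartzMap hφs
  let Ψ : SchwartzMap V ℂ := 𝓕⁻ Φ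
  refine ⟨φ, ∫ x, ‖Ψ x‖, ⟨Ψ, Ψ.integrable, le_rfl, fun y _ ↦ ?_⟩, ?_, fun y hy ↦ ?_⟩
  · rw [← SchwartzMap.fourier_coe, FourierTransform.fourier_fourierInv_eq]
    rfl
  · filter_upwards [β.eventuallyEq_one] with y hy
    simp [φ, hy]
  · have : β y = 0 := β.zero_of_le_dist (by
      have := mt (@hRU y) hy
      exact (not_le.1 this).le)
    simp [φ, this]

theorem fourierTransformCLM_vadd (t y : V) (τ : Lp ℂ 1 (volume : Measure V)) :
    Lp.fourierTransformCLM V ℂ (DomAddAct.mk (-t) +ᵥ τ) y =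
      𝐞 (-inner ℝ t y) • Lp.fourierTransformCLM V ℂ τ y := by
  have h1 : Lp.fourierTransformCLM V ℂ (DomAddAct.mk (-t) +ᵥ τ) y =
      𝓕 (fun x ↦ τ (-t + x)) y :=
    Real.fourier_congr_ae (DomAddAct.vadd_Lp_ae_eq (DomAddAct.mk (-t)) τ) y
  refine h1.trans ?_
  change _ = 𝐞 (-inner ℝ t y) • 𝓕 (⇑τ) y
  rw [Real.fourier_eq, Real.fourier_eq, Circle.smul_def, ← integral_smul,
    ← integral_add_left_eq_self _ t]
  congr with x
  rw [neg_add_cancel_left, inner_add_left, neg_add, AddChar.map_add_eq_mul, mul_smul]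
  rfl

theorem fourierTransformCLM_integral {g : V → Lp ℂ 1 (volume : Measure V)} (hg : Integrable g)
    (y : V) :
    Lp.fourierTransformCLM V ℂ (∫ t, g t) y = ∫ t, Lp.fourierTransformCLM V ℂ (g t) y :=
  (((BoundedContinuousFunction.evalCLM ℂ y).comp
    (Lp.fourierTransformCLM V ℂ)).integral_comp_comm hg).symm

theorem continuous_vadd_Lp (τ : Lp ℂ 1 (volume : Measure V)) :
    Continuous fun t : V ↦ DomAddAct.mk (-t) +ᵥ τ := by
  have : Fact ((1 : ENNReal) ≠ ⊤) := ⟨ENNReal.one_ne_top⟩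
  have h : Continuous (DomAddAct.mk : V → Vᵈᵃᵃ) := DomAddAct.continuous_mk
  exact (h.comp continuous_neg).vadd continuous_const

theorem tendsto_integral_norm_smul_comp_smul {E : Type*} [NormedAddCommGroup E] [NormedSpace ℂ E]
    {f : V → ℂ} (hf : Integrable f) {D : V → E} (hD : Continuous D) (hD0 : D 0 = 0) {C : ℝ}
    (hC : ∀ t, ‖D t‖ ≤ C) :
    Tendsto (fun r : ℝ ↦ ∫ t, ‖f t • D (r • t)‖) (𝓝 0) (𝓝 0) := by
  have hDr (r : ℝ) : Continuous fun t ↦ D (r • t) := by fun_prop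
  have hlim : Tendsto (fun r : ℝ ↦ ∫ t, ‖f t • D (r • t)‖) (𝓝 0) (𝓝 (∫ _ : V, (0 : ℝ))) := by
    refine tendsto_integral_filter_of_dominated_convergence (fun t ↦ ‖f t‖ * C)
      (.of_forall fun r ↦ (hf.1.smul (hDr r).aestronglyMeasurable).norm)
      (.of_forall fun r ↦ .of_forall fun t ↦ ?_) (hf.norm.mul_const _) (.of_forall fun t ↦ ?_)
    · rw [norm_norm, norm_smul]
      gcongr
      exact hC _
    · have : Continuous fun r : ℝ ↦ ‖f t • D (r • t)‖ := by fun_prop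
      simpa [hD0] using this.tendsto 0
  rwa [integral_zero] at hlim

theorem exists_isFourierOn_fourier_smul_sub {f : V → ℂ} (hf : Integrable f) {ε : ℝ}
    (hε : 0 < ε) : ∃ U ∈ 𝓝 (0 : V), ∃ r : ℝ, 0 < r ∧
      IsFourierOn U ε (fun y ↦ 𝓕 f (r • y) - 𝓕 f 0) := by
  obtain ⟨φ, c, hφ, hφ1, -⟩ := exists_isFourierOn_bump (0 : V) univ_mem
  obtain ⟨τ, -, hτ⟩ := IsFourierOn.iff_exists_Lp.1 hφ
  obtain ⟨D, hD⟩ : ∃ D : V → Lp ℂ 1 (volume : Measure V),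
      ∀ t, D t = (DomAddAct.mk (-t) +ᵥ τ) - τ :=
    ⟨_, fun _ ↦ rfl⟩
  have hDcont : Continuous D := by
    rw [funext hD]
    exact (continuous_vadd_Lp τ).sub continuous_const
  have hDle (t : V) : ‖D t‖ ≤ 2 * ‖τ‖ := by
    rw [hD]
    refine (norm_sub_le _ _).trans ?_
    rw [DomAddAct.norm_vadd_Lp, two_mul]
  have hD0 : D 0 = 0 := by
    rw [hD, neg_zero, DomAddAct.mk_zero, zero_vadd, sub_self]
  have hDr (r : ℝ) : Continuous fun t ↦ D (r • t) := by fun_prop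
  have hint (r : ℝ) : Integrable fun t ↦ f t • D (r • t) :=
    hf.smul_bdd (2 * ‖τ‖) (hDr r).aestronglyMeasurable (.of_forall fun t ↦ hDle _)
  have hlim := tendsto_integral_norm_smul_comp_smul hf hDcont hD0 hDle
  obtain ⟨r, hr, hr0⟩ := (((hlim.eventually_lt_const hε).filter_mono nhdsWithin_le_nhds).and
    (self_mem_nhdsWithin (s := Ioi (0 : ℝ)))).exists
  refine ⟨_, hφ1, r, hr0, IsFourierOn.iff_exists_Lp.2 ⟨∫ t, f t • D (r • t),
    (norm_integral_le_integral_norm _).trans hr.le, fun y hy ↦ ?_⟩⟩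
  have hτy : Lp.fourierTransformCLM V ℂ τ y = 1 := (hτ y trivial).trans hy
  have hDy (t : V) : Lp.fourierTransformCLM V ℂ (D (r • t)) y = 𝐞 (-inner ℝ t (r • y)) - 1 := by
    rw [hD, map_sub, BoundedContinuousFunction.sub_apply, fourierTransformCLM_vadd, hτy,
      real_inner_smul_left, real_inner_smul_right, Circle.smul_def, smul_eq_mul, mul_one]
  rw [fourierTransformCLM_integral (hint r), Real.fourier_eq, Real.fourier_eq, ← integral_sub
    ((Real.fourierIntegral_convergent_iff _).2 hf) ((Real.fourierIntegral_convergent_iff _).2 hf)]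
  congr with t
  rw [map_smul, BoundedContinuousFunction.smul_apply, hDy]
  simp only [Circle.smul_def, smul_eq_mul, inner_zero_right, neg_zero, AddChar.map_zero_eq_one,
    Circle.coe_one]
  ring

theorem exists_isFourierOn_fourier_sub {f : V → ℂ} (hf : Integrable f) (y₀ : V) {ε : ℝ}
    (hε : 0 < ε) : ∃ U ∈ 𝓝 y₀, IsFourierOn U ε (fun y ↦ 𝓕 f y - 𝓕 f y₀) := by
  have hf₀ := (Real.fourierIntegral_convergent_iff y₀).2 hf
  have hF (y : V) : 𝓕 (fun t ↦ 𝐞 (-inner ℝ t y₀) • f t) y = 𝓕 f (y + y₀) := by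
    rw [Real.fourier_eq, Real.fourier_eq]
    congr with t
    rw [smul_smul, ← AddChar.map_add_eq_mul, inner_add_right, neg_add]
  obtain ⟨U, hU, r, hr, hUF⟩ := exists_isFourierOn_fourier_smul_sub hf₀ hε
  refine ⟨_, ?_, (hUF.comp_smul_sub (inv_pos.2 hr) y₀).congr fun y _ ↦ ?_⟩
  · have : Continuous fun y : V ↦ r⁻¹ • (y - y₀) := by fun_prop
    exact this.continuousAt.preimage_mem_nhds (by simpa using hU)
  · simp only [hF, smul_smul, mul_inv_cancel₀ hr.ne', one_smul, sub_add_cancel, zero_add]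

theorem exists_isFourierOn_analyticAt_comp {f : V → ℂ} (hf : Integrable f) (y₀ : V) {h : ℂ → ℂ}
    (hh : AnalyticAt ℝ h (𝓕 f y₀)) :
    ∃ U ∈ 𝓝 y₀, ∃ c, IsFourierOn U c (fun y ↦ h (𝓕 f y)) := by
  obtain ⟨p, R, hp⟩ := hh
  obtain ⟨ρ, hρ0, hρR⟩ := ENNReal.lt_iff_exists_nnreal_btwn.1 hp.r_pos
  rw [ENNReal.coe_pos] at hρ0
  set ε : ℝ := ρ / 2 with hε
  have hε0 : 0 < ε := by positivity
  obtain ⟨U, hU, hUF⟩ := exists_isFourierOn_fourier_sub hf y₀ hε0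
  obtain ⟨φ, c, hφ, hφ1, -⟩ := exists_isFourierOn_bump y₀ univ_mem
  have hUF := hUF.mono (inter_subset_left (t := {y | φ y = 1}))
  have h1 : IsFourierOn (U ∩ {y | φ y = 1}) c (fun _ ↦ 1) :=
    (hφ.mono (subset_univ _)).congr fun y hy ↦ hy.2
  refine ⟨_, inter_mem hU hφ1, _, IsFourierOn.hasSum
    (F := fun n y ↦ p n fun _ ↦ 𝓕 f y - 𝓕 f y₀) (a := fun n ↦ c * (‖p n‖ * ρ ^ n)) (fun n ↦ ?_)
    ((p.summable_norm_mul_pow (hρR.trans_le hp.r_le)).mul_left c) fun y hy ↦ ?_⟩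
  · have hterm (S : Finset (Fin n)) : IsFourierOn (U ∩ {y | φ y = 1})
        (‖p n‖ * (c * ε ^ S.card * ε ^ Sᶜ.card))
        (fun y ↦ p n (S.piecewise (fun _ ↦ (1 : ℂ)) fun _ ↦ Complex.I) *
          (1 * ((𝓕 f y - 𝓕 f y₀).re : ℂ) ^ S.card * ((𝓕 f y - 𝓕 f y₀).im : ℂ) ^ Sᶜ.card)) := by
      have := (h1.mul_pow hUF.re S.card).mul_pow hUF.im Sᶜ.card
      refine (this.const_mul _).mono_const ?_
      gcongr
      · exact this.nonneg
      · refine ((p n).le_opNorm _).trans (mul_le_of_le_one_right (norm_nonneg _) ?_)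
        refine Finset.prod_le_one (fun _ _ ↦ norm_nonneg _) fun i _ ↦ ?_
        by_cases hi : i ∈ S <;> simp [hi]
    refine ((IsFourierOn.sum Finset.univ fun S _ ↦ hterm S).congr fun y _ ↦ ?_).mono_const
      (le_of_eq ?_)
    · set w := 𝓕 f y - 𝓕 f y₀
      have hw : (fun _ : Fin n ↦ w) = (fun _ ↦ w.re • (1 : ℂ)) + fun _ ↦ w.im • Complex.I := by
        ext
        simp
      rw [hw, ContinuousMultilinearMap.map_add_univ]
      refine Finset.sum_congr rfl fun S _ ↦ ?_
      have hpw : S.piecewise (fun _ : Fin n ↦ w.re • (1 : ℂ)) (fun _ ↦ w.im • Complex.I) =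
          fun i ↦ S.piecewise (fun _ ↦ w.re) (fun _ ↦ w.im) i •
            S.piecewise (fun _ ↦ (1 : ℂ)) (fun _ ↦ Complex.I) i := by
        ext i
        by_cases hi : i ∈ S <;> simp [hi]
      rw [hpw, ContinuousMultilinearMap.map_smul_univ, Finset.prod_piecewise]
      simp [Finset.compl_eq_univ_sdiff]
      ring
    · have hρ : (ρ : ℝ) = ε + ε := by rw [hε]; ring
      have := Fintype.sum_pow_mul_eq_add_pow (Fin n) ε ε
      rw [Fintype.card_fin] at this
      simp only [hρ, ← this, Finset.mul_sum, Finset.card_compl, Fintype.card_fin]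
      exact Finset.sum_congr rfl fun S _ ↦ by ring
  · have hy' : ‖𝓕 f y - 𝓕 f y₀‖ < ρ :=
      (hUF.norm_le hy).trans_lt (by rw [hε]; exact half_lt_self hρ0)
    have := hp.hasSum (y := 𝓕 f y - 𝓕 f y₀) (by
      rw [Metric.mem_eball, edist_zero_right]
      refine lt_trans ?_ hρR
      rw [enorm_eq_nnnorm]
      exact_mod_cast hy')
    simpa using this

theorem exists_isFourierOn_of_isCompact {Y : Set V} (hY : IsCompact Y) {H : V → ℂ}
    (hH : ∀ y ∈ Y, ∃ U ∈ 𝓝 y, ∃ c, IsFourierOn U c H) : ∃ c, IsFourierOn Y c H := by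
  suffices ∃ φ : V → ℂ, (∃ c, IsFourierOn univ c φ) ∧ (∃ c, IsFourierOn univ c fun y ↦ φ y * H y) ∧
      ∀ y ∈ Y, φ y = 1 by
    obtain ⟨φ, -, ⟨c, hc⟩, hφ⟩ := this
    exact ⟨c, (hc.mono (subset_univ Y)).congr fun y hy ↦ by simp [hφ y hy]⟩
  refine hY.induction_on ?_ ?_ ?_ fun y hy ↦ ?_
  · exact ⟨fun _ ↦ 0, ⟨0, .zero⟩, ⟨0, by simpa using .zero⟩, by simp⟩
  · rintro s t hst ⟨φ, h1, h2, h3⟩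
    exact ⟨φ, h1, h2, fun y hy ↦ h3 y (hst hy)⟩
  · rintro s t ⟨φ, ⟨a, ha⟩, ⟨b, hb⟩, hφ⟩ ⟨ψ, ⟨a', ha'⟩, ⟨b', hb'⟩, hψ⟩
    refine ⟨fun y ↦ φ y + ψ y + (-1) * (φ y * ψ y),
      ⟨_, (ha.add ha').add ((ha.mul ha').const_mul (-1))⟩,
      ⟨_, ((hb.add hb').add ((ha.mul hb').const_mul (-1))).congr fun y _ ↦ by ring⟩, ?_⟩
    rintro y (hy | hy)
    · simp [hφ y hy]
    · simp [hψ y hy]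
  · obtain ⟨U, hU, c, u, hu, huc, huH⟩ := hH y hy
    obtain ⟨φ, a, hφ, hφ1, hφ0⟩ := exists_isFourierOn_bump y hU
    have hu' : IsFourierOn univ c (𝓕 u) := ⟨u, hu, huc, fun _ _ ↦ rfl⟩
    refine ⟨_, mem_nhdsWithin_of_mem_nhds hφ1, φ, ⟨a, hφ⟩,
      ⟨_, (hφ.mul hu').congr fun z _ ↦ ?_⟩, fun z hz ↦ hz⟩
    by_cases hz : z ∈ U
    · simp [huH z hz]
    · simp [hφ0 z hz]

theorem isCompact_preimage_fourier {f : V → ℂ} (hf : Integrable f) {K : Set ℂ} (hK : IsCompact K)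
    (h0K : (0 : ℂ) ∉ K) : IsCompact (𝓕 f ⁻¹' K) := by
  have hcont : Continuous (𝓕 f) := VectorFourier.fourierIntegral_continuous
    Real.continuous_fourierChar (innerSL ℝ).continuous₂ hf
  have hlim : Tendsto (𝓕 f) (cocompact V) (𝓝 0) := tendsto_integral_exp_inner_smul_cocompact f
  obtain ⟨C, hC, hCK⟩ := mem_cocompact.1 (hlim (hK.isClosed.isOpen_compl.mem_nhds h0K))
  refine hC.of_isClosed_subset (hK.isClosed.preimage hcont) fun y hy ↦ ?_
  by_contra hyC
  exact hCK hyC hy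

end

/-- **Local Wiener–Levi theorem in `L¹(ℝ^d)`, case `0 ∉ K`.** Let `K ⊆ ℂ` be compact with
`0 ∉ K` and let `h` be real-analytic on an open neighborhood of `K`. Then for each
`f ∈ L¹(ℝ^d)` there is `g ∈ L¹(ℝ^d)` such that `h(f̂(y)) = ĝ(y)` for every `y` with
`f̂(y) ∈ K`. -/
theorem wiener_levi_local_L1_zero_not_mem {d : ℕ}
    (K : Set ℂ) (hK : IsCompact K) (h0K : (0 : ℂ) ∉ K)
    (h : ℂ → ℂ) (V : Set ℂ) (hV : IsOpen V) (hKV : K ⊆ V)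
    (hh : AnalyticOnNhd ℝ h V)
    (f : EuclideanSpace ℝ (Fin d) → ℂ) (hf : Integrable f) :
    ∃ g : EuclideanSpace ℝ (Fin d) → ℂ, Integrable g ∧
      ∀ y : EuclideanSpace ℝ (Fin d), 𝓕 f y ∈ K → h (𝓕 f y) = 𝓕 g y := by
  obtain ⟨c, g, hg, -, hgh⟩ := exists_isFourierOn_of_isCompact
    (isCompact_preimage_fourier hf hK h0K)
    fun y hy ↦ exists_isFourierOn_analyticAt_comp hf y (hh _ (hKV hy))
  exact ⟨g, hg, fun y hy ↦ (hgh y hy).symm⟩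
end

section
/- Let λ_R and λ_I be complex measures on ℝ^d of finite total variation, each without singular component (each a sum of an absolutely continuous and a pure point measure), let (κ_{p,q})_{p,q≥0} ⊂ L¹(ℝ^d) with sup_{p,q} ‖κ_{p,q}‖_{L¹} < ∞, let (ν_{p,q})_{p,q≥0} be pure point measures with sup_{p,q} ‖ν_{p,q}‖ < ∞, and suppose ‖λ_R‖ < 2ε and ‖λ_I‖ < 2ε for some ε > 0. Then the series ν = Σ_{p,q=0}^∞ (λ_R/3ε)^{*p} * (λ_I/3ε)^{*q} * (κ_{p,q} dx + ν_{p,q}) converges in total variation norm to a complex measure ν of finite total variation without singular component, and ν̂(y) = Σ_{p,q=0}^∞ (λ̂_R(y)/3ε)^p (λ̂_I(y)/3ε)^q (κ̂_{p,q}(y) + ν̂_{p,q}(y)) for every y ∈ ℝ^d. -/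
open MeasureTheory Filter
open scoped FourierTransform Topology

noncomputable section

variable {α : Type*} [MeasurableSpace α]

/-- The four nonnegative finite measures constituting a complex measure `μ`:
the positive and negative Jordan parts of `Re μ` and of `Im μ`. -/
def cmPart (μ : ComplexMeasure α) : Fin 4 → Measure α
  | 0 => (ComplexMeasure.re μ).toJordanDecomposition.posPart
  | 1 => (ComplexMeasure.re μ).toJordanDecomposition.negPart
  | 2 => (ComplexMeasure.im μ).toJordanDecomposition.posPart
  | 3 => (ComplexMeasure.im μ).toJordanDecomposition.negPart

instance (μ : ComplexMeasure α) (i : Fin 4) : IsFiniteMeasure (cmPart μ i) := by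
  fin_cases i <;> unfold cmPart <;> infer_instance

/-- The integral `∫ f dμ` of a complex function against a complex measure `μ`. -/
def cmIntegral (μ : ComplexMeasure α) (f : α → ℂ) : ℂ :=
  ((∫ x, f x ∂cmPart μ 0) - ∫ x, f x ∂cmPart μ 1) +
    Complex.I * ((∫ x, f x ∂cmPart μ 2) - ∫ x, f x ∂cmPart μ 3)

open scoped Classical in
/-- A finite positive measure regarded as a complex measure. -/
def Measure.toComplexMeasure (m : Measure α) : ComplexMeasure α :=
  if h : IsFiniteMeasure m then
    (@MeasureTheory.Measure.toSignedMeasure α _ m h).mapRange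
      Complex.ofRealHom.toAddMonoidHom Complex.continuous_ofReal
  else 0

/-- The total variation `‖μ‖` of a complex measure `μ`. -/
def cmTV (μ : ComplexMeasure α) : ℝ :=
  ⨆ P : { P : ℕ → Set α // (∀ n, MeasurableSet (P n)) ∧ Pairwise (Function.onFun Disjoint P) },
    ∑' n, ‖μ (P.1 n)‖

/-- Convolution of complex measures: `(μ * ν)(E) = ∬ 1_E(x + y) μ(dx) ν(dy)`. -/
def cmConv {E : Type*} [MeasurableSpace E] [Add E] (μ ν : ComplexMeasure E) : ComplexMeasure E :=
  ∑ i : Fin 4, ∑ j : Fin 4,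
    ((![1, -1, Complex.I, -Complex.I] i) * (![1, -1, Complex.I, -Complex.I] j)) •
      Measure.toComplexMeasure
        (Measure.map (fun p : E × E => p.1 + p.2) ((cmPart μ i).prod (cmPart ν j)))

/-- Convolution powers `μ^{*p}`, with `μ^{*0} = δ₀`. -/
def cmConvPow {E : Type*} [MeasurableSpace E] [Add E] [Zero E]
    (μ : ComplexMeasure E) : ℕ → ComplexMeasure E
  | 0 => Measure.toComplexMeasure (Measure.dirac (0 : E))
  | n + 1 => cmConv (cmConvPow μ n) μ

open scoped RealInnerProductSpace in
/-- The Fourier–Stieltjes transform `μ̂(y) = ∫ e^{-2πi⟨x,y⟩} μ(dx)` of a complex measure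
on `ℝ^d`. -/
def cmFourier {d : ℕ} (μ : ComplexMeasure (EuclideanSpace ℝ (Fin d)))
    (y : EuclideanSpace ℝ (Fin d)) : ℂ :=
  cmIntegral μ fun x => Complex.exp (-2 * Real.pi * Complex.I * (⟪x, y⟫ : ℝ))

/-- `μ` is a pure point complex measure: `μ = Σ_n b_n δ_{ρ_n}` with `Σ_n |b_n| < ∞`. -/
def cmPurePoint {d : ℕ} (μ : ComplexMeasure (EuclideanSpace ℝ (Fin d))) : Prop :=
  ∃ (b : ℕ → ℂ) (ρ : ℕ → EuclideanSpace ℝ (Fin d)), Summable (fun n => ‖b n‖) ∧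
    ∀ A : Set (EuclideanSpace ℝ (Fin d)), MeasurableSet A →
      μ A = ∑' n, Set.indicator A (fun _ => b n) (ρ n)

/-- `μ` has no singular component: `μ = g dx + Σ_n b_n δ_{ρ_n}` with `g ∈ L¹` and
`Σ_n |b_n| < ∞`. -/
def cmNoSingular {d : ℕ} (μ : ComplexMeasure (EuclideanSpace ℝ (Fin d))) : Prop :=
  ∃ (g : EuclideanSpace ℝ (Fin d) → ℂ) (b : ℕ → ℂ) (ρ : ℕ → EuclideanSpace ℝ (Fin d)),
    Integrable g ∧ Summable (fun n => ‖b n‖) ∧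
    ∀ A : Set (EuclideanSpace ℝ (Fin d)), MeasurableSet A →
      μ A = (∫ x in A, g x) + ∑' n, Set.indicator A (fun _ => b n) (ρ n)

/-- The absolutely continuous complex measure `κ dx` with density `κ : ℝ^d → ℂ`. -/
def cmOfDensity {d : ℕ} (κ : EuclideanSpace ℝ (Fin d) → ℂ) :
    ComplexMeasure (EuclideanSpace ℝ (Fin d)) :=
  (Measure.toComplexMeasure (volume.withDensity fun x => ENNReal.ofReal (κ x).re) -
      Measure.toComplexMeasure (volume.withDensity fun x => ENNReal.ofReal (-(κ x).re))) +
    Complex.I •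
      (Measure.toComplexMeasure (volume.withDensity fun x => ENNReal.ofReal (κ x).im) -
        Measure.toComplexMeasure (volume.withDensity fun x => ENNReal.ofReal (-(κ x).im)))

end

noncomputable section

section General

variable {α : Type*} [MeasurableSpace α]

/-- The complex coefficients of the four positive parts of a complex measure. -/
def cmCoeff : Fin 4 → ℂ := ![1, -1, Complex.I, -Complex.I]

lemma toComplexMeasure_apply (m : Measure α) [h : IsFiniteMeasure m] {s : Set α}
    (hs : MeasurableSet s) : Measure.toComplexMeasure m s = (m.real s : ℂ) := by
  simp [Measure.toComplexMeasure, h, VectorMeasure.mapRange_apply,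
    Measure.toSignedMeasure_apply_measurable hs]

lemma sum_cmPart (μ : ComplexMeasure α) :
    ∑ i, cmCoeff i • Measure.toComplexMeasure (cmPart μ i) = μ := by
  have key (t : SignedMeasure α) {s : Set α} (hs : MeasurableSet s) :
      t.toJordanDecomposition.posPart.real s - t.toJordanDecomposition.negPart.real s = t s := by
    conv_rhs => rw [← t.toSignedMeasure_toJordanDecomposition]
    simp [JordanDecomposition.toSignedMeasure, Measure.toSignedMeasure_apply_measurable hs]
  ext s hs
  have hr := key (ComplexMeasure.re μ) hs
  have hi := key (ComplexMeasure.im μ) hs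
  simp only [ComplexMeasure.re_apply, ComplexMeasure.im_apply] at hr hi
  have hr' : (cmPart μ 0).real s - (cmPart μ 1).real s = (μ s).re := hr
  have hi' : (cmPart μ 2).real s - (cmPart μ 3).real s = (μ s).im := hi
  simp only [Fin.sum_univ_four, add_apply, smul_apply,
    toComplexMeasure_apply _ hs, cmCoeff]
  apply Complex.ext
  · simp [← hr', sub_eq_add_neg]
  · simp [← hi', sub_eq_add_neg]

lemma variation_toComplexMeasure_le (m : Measure α) [IsFiniteMeasure m] :
    (Measure.toComplexMeasure m).variation ≤ m := by
  refine VectorMeasure.variation_le_of_forall_enorm_le fun s hs => ?_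
  rw [toComplexMeasure_apply m hs, ← ofReal_norm, Complex.norm_real,
    Real.norm_of_nonneg measureReal_nonneg, ofReal_measureReal]

instance isFiniteMeasure_variation_toComplexMeasure (m : Measure α) [IsFiniteMeasure m] :
    IsFiniteMeasure (Measure.toComplexMeasure m).variation :=
  isFiniteMeasure_of_le _ (variation_toComplexMeasure_le m)

instance isFiniteMeasure_variation_complexMeasure (μ : ComplexMeasure α) :
    IsFiniteMeasure μ.variation := by
  rw [← sum_cmPart μ]
  exact isFiniteMeasure_of_le _ (VectorMeasure.variation_finsetSum_le _ _)

lemma summable_norm_apply (μ : ComplexMeasure α) {P : ℕ → Set α} (hP : ∀ n, MeasurableSet (P n))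
    (hd : Pairwise (Function.onFun Disjoint P)) : Summable fun n => ‖μ (P n)‖ := by
  have h : ∑' n, μ.variation (P n) ≤ μ.variation Set.univ := by
    rw [← measure_iUnion hd hP]
    exact measure_mono (Set.subset_univ _)
  exact (ENNReal.summable_toReal (ne_top_of_le_ne_top (measure_ne_top _ _) h)).of_nonneg_of_le
    (fun _ => norm_nonneg _) fun n => VectorMeasure.norm_measure_le_variation

lemma tsum_norm_apply_le_variation (μ : ComplexMeasure α) {P : ℕ → Set α}
    (hP : ∀ n, MeasurableSet (P n)) (hd : Pairwise (Function.onFun Disjoint P)) :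
    ∑' n, ‖μ (P n)‖ ≤ μ.variation.real Set.univ := by
  have h : ∑' n, μ.variation (P n) ≤ μ.variation Set.univ := by
    rw [← measure_iUnion hd hP]
    exact measure_mono (Set.subset_univ _)
  refine (Summable.tsum_le_tsum (fun n => VectorMeasure.norm_measure_le_variation)
    (summable_norm_apply μ hP hd)
    (ENNReal.summable_toReal (ne_top_of_le_ne_top (measure_ne_top _ _) h))).trans ?_
  simp only [Measure.real]
  rw [← ENNReal.tsum_toReal_eq (fun n => measure_ne_top _ _)]
  exact ENNReal.toReal_mono (measure_ne_top _ _) h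

/-- The real-valued total variation is the total mass of the variation measure. -/
lemma cmTV_eq (μ : ComplexMeasure α) : cmTV μ = μ.variation.real Set.univ := by
  have hne : Nonempty { P : ℕ → Set α // (∀ n, MeasurableSet (P n)) ∧
      Pairwise (Function.onFun Disjoint P) } :=
    ⟨fun _ => ∅, fun _ => MeasurableSet.empty, fun _ _ _ => Set.disjoint_empty _⟩
  have hbdd : BddAbove (Set.range fun P : { P : ℕ → Set α // (∀ n, MeasurableSet (P n)) ∧
      Pairwise (Function.onFun Disjoint P) } => ∑' n, ‖μ (P.1 n)‖) := by
    refine ⟨μ.variation.real Set.univ, ?_⟩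
    rintro _ ⟨P, rfl⟩
    exact tsum_norm_apply_le_variation μ P.2.1 P.2.2
  refine le_antisymm (ciSup_le fun P => tsum_norm_apply_le_variation μ P.2.1 P.2.2) ?_
  refine le_of_forall_lt fun c hc => ?_
  rcases lt_or_ge c 0 with h0 | h0
  · refine h0.trans_le (le_ciSup_of_le hbdd hne.some (tsum_nonneg fun _ => norm_nonneg _))
  have hc' : ENNReal.ofReal c < μ.variation Set.univ := by
    rwa [ENNReal.ofReal_lt_iff_lt_toReal h0 (measure_ne_top _ _)]
  obtain ⟨P, -, hPd, hPm, hP⟩ := μ.exists_lt_sum_of_lt_variation MeasurableSet.univ hc'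
  let e := P.equivFin
  let Q : ℕ → Set α := fun n => if h : n < P.card then (e.symm ⟨n, h⟩ : Set α) else ∅
  have hQm (n) : MeasurableSet (Q n) := by
    by_cases h : n < P.card
    · simpa [Q, h] using hPm _ (e.symm ⟨n, h⟩).2
    · simp [Q, h]
  have hQd : Pairwise (Function.onFun Disjoint Q) := by
    intro i j hij
    by_cases hi : i < P.card <;> by_cases hj : j < P.card <;> simp only [Function.onFun, Q, hi, hj,
      dite_true, dite_false, Set.disjoint_empty, Set.empty_disjoint]
    refine hPd (e.symm ⟨i, hi⟩).2 (e.symm ⟨j, hj⟩).2 fun h => hij ?_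
    simpa using e.symm.injective (Subtype.ext h)
  have hsum : ∑' n, ‖μ (Q n)‖ = ∑ p ∈ P, ‖μ p‖ := by
    rw [tsum_eq_sum (s := Finset.range P.card), Finset.sum_range, ← Finset.sum_coe_sort P]
    · refine Fintype.sum_equiv e.symm _ _ fun i => ?_
      simp [Q]
    · intro n hn
      have hn' : ¬ n < P.card := by simpa using hn
      simp [Q, hn']
  have hlt : c < ∑ p ∈ P, ‖μ p‖ := by
    rw [← ENNReal.ofReal_lt_ofReal_iff_of_nonneg h0,
      ENNReal.ofReal_sum_of_nonneg fun _ _ => norm_nonneg _]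
    simpa using hP
  exact (hlt.trans_eq hsum.symm).trans_le (le_ciSup hbdd ⟨Q, hQm, hQd⟩)

lemma cmTV_nonneg (μ : ComplexMeasure α) : 0 ≤ cmTV μ := by
  rw [cmTV_eq]
  exact measureReal_nonneg

lemma cmTV_le_of_variation_le {μ : ComplexMeasure α} {m : Measure α} [IsFiniteMeasure m]
    (h : μ.variation ≤ m) : cmTV μ ≤ m.real Set.univ := by
  rw [cmTV_eq]
  exact ENNReal.toReal_mono (measure_ne_top _ _) (h _)

lemma cmTV_add_le (μ ν : ComplexMeasure α) : cmTV (μ + ν) ≤ cmTV μ + cmTV ν := by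
  refine (cmTV_le_of_variation_le VectorMeasure.variation_add_le).trans_eq ?_
  rw [measureReal_add_apply, cmTV_eq, cmTV_eq]

lemma cmTV_smul (c : ℂ) (μ : ComplexMeasure α) : cmTV (c • μ) = ‖c‖ * cmTV μ := by
  simp [cmTV_eq, VectorMeasure.variation_smul, Measure.real]

lemma cmTV_toComplexMeasure_le (m : Measure α) [IsFiniteMeasure m] :
    cmTV (Measure.toComplexMeasure m) ≤ m.real Set.univ :=
  cmTV_le_of_variation_le (variation_toComplexMeasure_le m)

lemma integrable_complexMeasure (μ : ComplexMeasure α) {f : α → ℂ} (hf : Measurable f) {C : ℝ}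
    (hC : ∀ x, ‖f x‖ ≤ C) : μ.Integrable f :=
  Integrable.of_bound hf.aestronglyMeasurable C (.of_forall hC)

lemma integral_sum_smul_toComplexMeasure {ι : Type*} [Fintype ι] (c : ι → ℂ) (m : ι → Measure α)
    [∀ i, IsFiniteMeasure (m i)] {f : α → ℂ} (hf : Measurable f) {C : ℝ} (hC : ∀ x, ‖f x‖ ≤ C) :
    (∑ i, c i • Measure.toComplexMeasure (m i)).integral f (ContinuousLinearMap.mul ℝ ℂ) =
      ∑ i, c i * ∫ x, f x ∂m i := by
  have simple (g : SimpleFunc α ℂ) :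
      (∑ i, c i • Measure.toComplexMeasure (m i)).integral g (ContinuousLinearMap.mul ℝ ℂ) =
      ∑ i, c i * ∫ x, g x ∂m i := by
    induction g using SimpleFunc.induction with
    | const a hs =>
      rename_i s
      have hcoe : ⇑(SimpleFunc.piecewise s hs (SimpleFunc.const α a) (SimpleFunc.const α 0)) =
          s.indicator fun _ => a := by
        ext x
        by_cases hx : x ∈ s <;> simp [hx]
      rw [hcoe, VectorMeasure.integral_indicator hs]
      simp only [VectorMeasure.integral_const, integral_indicator hs, integral_const]
      rw [VectorMeasure.restrict_apply _ hs MeasurableSet.univ, Set.univ_inter]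
      simp only [ContinuousLinearMap.mul_apply', sum_apply, smul_apply,
        toComplexMeasure_apply _ hs, Finset.mul_sum, measureReal_restrict_apply_univ]
      refine Finset.sum_congr rfl fun i _ => ?_
      simp only [smul_eq_mul, Complex.real_smul]
      ring
    | add _ h1 h2 =>
      rename_i f g _
      obtain ⟨A, hA⟩ := f.exists_forall_norm_le
      obtain ⟨B, hB⟩ := g.exists_forall_norm_le
      simp only [SimpleFunc.coe_add]
      rw [VectorMeasure.integral_add (integrable_complexMeasure _ f.measurable hA)
        (integrable_complexMeasure _ g.measurable hB), h1, h2, ← Finset.sum_add_distrib]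
      refine Finset.sum_congr rfl fun i _ => ?_
      rw [← mul_add, ← integral_add (f.integrable_of_isFiniteMeasure)
        (g.integrable_of_isFiniteMeasure)]
      rfl
  have hsm := hf.stronglyMeasurable
  have hb (n : ℕ) (x : α) : ‖hsm.approxBounded C n x‖ ≤ C :=
    hsm.norm_approxBounded_le ((norm_nonneg _).trans (hC x)) n x
  have ht (x : α) : Tendsto (fun n => hsm.approxBounded C n x) atTop (𝓝 (f x)) :=
    hsm.tendsto_approxBounded_of_norm_le (hC x)
  have h1 := VectorMeasure.tendsto_integral_of_dominated_convergence
    (μ := ∑ i, c i • Measure.toComplexMeasure (m i)) (B := ContinuousLinearMap.mul ℝ ℂ)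
    (fun _ => C) (fun n => (hsm.approxBounded C n).measurable.aestronglyMeasurable)
    (integrable_const C) (fun n => .of_forall (hb n)) (.of_forall ht)
  have h2 : Tendsto (fun n => ∑ i, c i * ∫ x, hsm.approxBounded C n x ∂m i) atTop
      (𝓝 (∑ i, c i * ∫ x, f x ∂m i)) :=
    tendsto_finsetSum _ fun i _ => tendsto_const_nhds.mul <|
      tendsto_integral_of_dominated_convergence (fun _ => C)
        (fun n => (hsm.approxBounded C n).measurable.aestronglyMeasurable)
        (integrable_const C) (fun n => .of_forall (hb n)) (.of_forall ht)
  simp only [simple] at h1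
  exact tendsto_nhds_unique h1 h2

lemma cmIntegral_eq (μ : ComplexMeasure α) {f : α → ℂ} (hf : Measurable f) {C : ℝ}
    (hC : ∀ x, ‖f x‖ ≤ C) : cmIntegral μ f = μ.integral f (ContinuousLinearMap.mul ℝ ℂ) := by
  conv_rhs => rw [← sum_cmPart μ]
  rw [integral_sum_smul_toComplexMeasure _ _ hf hC, Fin.sum_univ_four]
  simp [cmIntegral, cmCoeff]
  ring

lemma cmIntegral_sum_smul_toComplexMeasure {ι : Type*} [Fintype ι] (c : ι → ℂ) (m : ι → Measure α)
    [∀ i, IsFiniteMeasure (m i)] {f : α → ℂ} (hf : Measurable f) {C : ℝ} (hC : ∀ x, ‖f x‖ ≤ C) :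
    cmIntegral (∑ i, c i • Measure.toComplexMeasure (m i)) f = ∑ i, c i * ∫ x, f x ∂m i := by
  rw [cmIntegral_eq _ hf hC, integral_sum_smul_toComplexMeasure c m hf hC]

lemma cmIntegral_eq_sum (μ : ComplexMeasure α) (f : α → ℂ) :
    cmIntegral μ f = ∑ i, cmCoeff i * ∫ x, f x ∂cmPart μ i := by
  simp [cmIntegral, cmCoeff, Fin.sum_univ_four]
  ring

lemma cmIntegral_add (μ ν : ComplexMeasure α) {f : α → ℂ} (hf : Measurable f) {C : ℝ}
    (hC : ∀ x, ‖f x‖ ≤ C) : cmIntegral (μ + ν) f = cmIntegral μ f + cmIntegral ν f := by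
  simp only [cmIntegral_eq _ hf hC]
  exact VectorMeasure.integral_add_vectorMeasure (integrable_complexMeasure _ hf hC)
    (integrable_complexMeasure _ hf hC)

lemma cmIntegral_smul (c : ℂ) (μ : ComplexMeasure α) {f : α → ℂ} (hf : Measurable f) {C : ℝ}
    (hC : ∀ x, ‖f x‖ ≤ C) : cmIntegral (c • μ) f = c * cmIntegral μ f := by
  conv_lhs => rw [← sum_cmPart μ]
  simp only [Finset.smul_sum, smul_smul]
  rw [cmIntegral_sum_smul_toComplexMeasure _ _ hf hC, cmIntegral_eq_sum, Finset.mul_sum]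
  simp only [mul_assoc]

lemma cmIntegral_toComplexMeasure (m : Measure α) [IsFiniteMeasure m] {f : α → ℂ}
    (hf : Measurable f) {C : ℝ} (hC : ∀ x, ‖f x‖ ≤ C) :
    cmIntegral (Measure.toComplexMeasure m) f = ∫ x, f x ∂m := by
  simpa using cmIntegral_sum_smul_toComplexMeasure (ι := Unit) (fun _ => 1) (fun _ => m) hf hC

lemma norm_cmIntegral_le (μ : ComplexMeasure α) {f : α → ℂ} (hf : Measurable f)
    (hC : ∀ x, ‖f x‖ ≤ 1) : ‖cmIntegral μ f‖ ≤ cmTV μ := by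
  rw [cmIntegral_eq _ hf hC, cmTV_eq]
  refine (VectorMeasure.norm_integral_le_of_norm_le_const (.of_forall hC)).trans ?_
  simp

end General

section Convolution

variable {E : Type*} [MeasurableSpace E]

lemma prod_eq_sum_cmPart (μ ν : ComplexMeasure E) :
    μ.prod ν (ContinuousLinearMap.mul ℝ ℂ) = ∑ i, ∑ j, (cmCoeff i * cmCoeff j) •
      Measure.toComplexMeasure ((cmPart μ i).prod (cmPart ν j)) := by
  refine VectorMeasure.prod_eq_of_forall_apply_prod fun s t hs ht => ?_
  conv_rhs => rw [← sum_cmPart μ, ← sum_cmPart ν]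
  simp only [sum_apply, smul_apply, toComplexMeasure_apply _ hs, toComplexMeasure_apply _ ht,
    toComplexMeasure_apply _ (hs.prod ht), ContinuousLinearMap.mul_apply', Finset.sum_mul_sum,
    measureReal_prod_prod, smul_eq_mul, Complex.ofReal_mul]
  refine Finset.sum_congr rfl fun i _ => Finset.sum_congr rfl fun j _ => ?_
  ring

variable [Add E] [MeasurableAdd₂ E]

lemma cmConv_eq_map (μ ν : ComplexMeasure E) :
    cmConv μ ν = (μ.prod ν (ContinuousLinearMap.mul ℝ ℂ)).map fun p : E × E => p.1 + p.2 := by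
  have hadd : Measurable fun p : E × E => p.1 + p.2 := measurable_add
  ext s hs
  rw [VectorMeasure.map_apply _ hadd hs, prod_eq_sum_cmPart]
  simp only [cmConv, sum_apply, smul_apply, toComplexMeasure_apply _ hs,
    toComplexMeasure_apply _ (hadd hs), map_measureReal_apply hadd hs]
  rfl

lemma variation_cmConv_le (μ ν : ComplexMeasure E) :
    (cmConv μ ν).variation ≤
      (μ.variation.prod ν.variation).map fun p : E × E => p.1 + p.2 := by
  rw [cmConv_eq_map]
  refine VectorMeasure.variation_map_le.trans (Measure.map_mono ?_ measurable_add)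
  refine VectorMeasure.variation_prod_le.trans ?_
  simp [enorm_eq_nnnorm]

lemma cmTV_cmConv_le (μ ν : ComplexMeasure E) : cmTV (cmConv μ ν) ≤ cmTV μ * cmTV ν := by
  refine (cmTV_le_of_variation_le (variation_cmConv_le μ ν)).trans_eq ?_
  rw [map_measureReal_apply measurable_add MeasurableSet.univ, Set.preimage_univ,
    ← Set.univ_prod_univ, measureReal_prod_prod, cmTV_eq, cmTV_eq]

lemma cmIntegral_cmConv (μ ν : ComplexMeasure E) {f : E → ℂ} (hf : Measurable f) {C : ℝ}
    (hC : ∀ x, ‖f x‖ ≤ C) (hmul : ∀ x y, f (x + y) = f x * f y) :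
    cmIntegral (cmConv μ ν) f = cmIntegral μ f * cmIntegral ν f := by
  have hadd : Measurable fun p : E × E => p.1 + p.2 := measurable_add
  have h : cmConv μ ν = ∑ ij : Fin 4 × Fin 4, (cmCoeff ij.1 * cmCoeff ij.2) •
      Measure.toComplexMeasure (Measure.map (fun p : E × E => p.1 + p.2)
        ((cmPart μ ij.1).prod (cmPart ν ij.2))) := by
    rw [Fintype.sum_prod_type]
    rfl
  rw [h, cmIntegral_sum_smul_toComplexMeasure _ _ hf hC, Fintype.sum_prod_type,
    cmIntegral_eq_sum, cmIntegral_eq_sum, Finset.sum_mul_sum]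
  refine Finset.sum_congr rfl fun i _ => Finset.sum_congr rfl fun j _ => ?_
  rw [integral_map hadd.aemeasurable hf.aestronglyMeasurable]
  simp only [hmul]
  rw [integral_prod_mul]
  ring

end Convolution

section ConvolutionPower

variable {E : Type*} [MeasurableSpace E] [AddZeroClass E] [MeasurableAdd₂ E]

lemma cmTV_cmConvPow_le (μ : ComplexMeasure E) (n : ℕ) : cmTV (cmConvPow μ n) ≤ cmTV μ ^ n := by
  induction n with
  | zero => simpa [cmConvPow] using cmTV_toComplexMeasure_le (Measure.dirac (0 : E))
  | succ n ih =>
    refine (cmTV_cmConv_le _ _).trans ?_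
    rw [pow_succ]
    gcongr
    exact cmTV_nonneg μ

lemma cmIntegral_cmConvPow (μ : ComplexMeasure E) {f : E → ℂ} (hf : Measurable f) {C : ℝ}
    (hC : ∀ x, ‖f x‖ ≤ C) (hmul : ∀ x y, f (x + y) = f x * f y) (h0 : f 0 = 1) (n : ℕ) :
    cmIntegral (cmConvPow μ n) f = cmIntegral μ f ^ n := by
  induction n with
  | zero => simp [cmConvPow, cmIntegral_toComplexMeasure _ hf hC,
      integral_dirac' _ _ hf.stronglyMeasurable, h0]
  | succ n ih => rw [cmConvPow, cmIntegral_cmConv _ _ hf hC hmul, ih, pow_succ]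

end ConvolutionPower

section Series

variable {α ι : Type*} [MeasurableSpace α]

lemma summable_apply_of_summable_cmTV {μ : ι → ComplexMeasure α}
    (h : Summable fun i => cmTV (μ i)) (A : Set α) : Summable fun i => μ i A := by
  refine Summable.of_norm (h.of_nonneg_of_le (fun _ => norm_nonneg _) fun i => ?_)
  rw [cmTV_eq]
  exact (VectorMeasure.norm_measure_le_variation (μ := μ i) (E := A)).trans
    (measureReal_mono (Set.subset_univ A))

/-- The sum of a series of complex measures that converges absolutely in total variation. -/
def cmTsum (μ : ι → ComplexMeasure α) (h : Summable fun i => cmTV (μ i)) : ComplexMeasure α where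
  measureOf' A := ∑' i, μ i A
  empty' := by simp
  not_measurable' A hA := by simp [VectorMeasure.not_measurable _ hA]
  m_iUnion' A hA hd := by
    have hs : Summable fun p : ι × ℕ => μ p.1 (A p.2) := by
      refine Summable.of_norm ((summable_prod_of_nonneg fun _ => norm_nonneg _).2
        ⟨fun i => summable_norm_apply (μ i) hA hd, h.of_nonneg_of_le
          (fun _ => tsum_nonneg fun _ => norm_nonneg _) fun i => ?_⟩)
      rw [cmTV_eq]
      exact tsum_norm_apply_le_variation (μ i) hA hd
    have hi : ∑' i, μ i (⋃ n, A n) = ∑' p : ι × ℕ, μ p.1 (A p.2) := by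
      rw [hs.tsum_prod]
      exact tsum_congr fun i => ((μ i).m_iUnion hA hd).tsum_eq.symm
    rw [hi]
    exact ((Equiv.prodComm ℕ ι).hasSum_iff.2 hs.hasSum).prod_fiberwise
      fun n => (summable_apply_of_summable_cmTV h (A n)).hasSum

lemma cmTsum_apply (μ : ι → ComplexMeasure α) (h : Summable fun i => cmTV (μ i)) (A : Set α) :
    cmTsum μ h A = ∑' i, μ i A := rfl

lemma cmTV_cmTsum_sub_sum_le (μ : ι → ComplexMeasure α) (h : Summable fun i => cmTV (μ i))
    (F : Finset ι) :
    cmTV (cmTsum μ h - ∑ i ∈ F, μ i) ≤ ∑' i : { i // i ∉ F }, cmTV (μ i) := by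
  have hle : (cmTsum μ h - ∑ i ∈ F, μ i).variation ≤
      Measure.sum fun i : { i // i ∉ F } => (μ i).variation := by
    refine VectorMeasure.variation_le_of_forall_enorm_le fun A hA => ?_
    have hsum := summable_apply_of_summable_cmTV h A
    have heq : (cmTsum μ h - ∑ i ∈ F, μ i) A = ∑' i : { i // i ∉ F }, μ i A := by
      rw [sub_apply, cmTsum_apply, sum_apply, ← hsum.sum_add_tsum_subtype_compl F,
        add_sub_cancel_left]
    rw [heq, Measure.sum_apply _ hA]
    exact enorm_tsum_le_tsum_enorm.trans
      (ENNReal.tsum_le_tsum fun i => VectorMeasure.enorm_measure_le_variation _ _)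
  have hfin : (Measure.sum fun i : { i // i ∉ F } => (μ i).variation) Set.univ =
      ENNReal.ofReal (∑' i : { i // i ∉ F }, cmTV (μ i)) := by
    rw [Measure.sum_apply _ MeasurableSet.univ,
      ENNReal.ofReal_tsum_of_nonneg (fun i => cmTV_nonneg _) (h.subtype _)]
    refine tsum_congr fun i => ?_
    rw [cmTV_eq, ofReal_measureReal]
  have : IsFiniteMeasure (Measure.sum fun i : { i // i ∉ F } => (μ i).variation) :=
    ⟨hfin ▸ ENNReal.ofReal_lt_top⟩
  refine (cmTV_le_of_variation_le hle).trans_eq ?_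
  rw [Measure.real, hfin, ENNReal.toReal_ofReal (tsum_nonneg fun i => cmTV_nonneg _)]

lemma tendsto_cmTV_cmTsum_sub_sum (μ : ι → ComplexMeasure α) (h : Summable fun i => cmTV (μ i)) :
    Tendsto (fun F : Finset ι => cmTV (cmTsum μ h - ∑ i ∈ F, μ i)) atTop (𝓝 0) :=
  squeeze_zero (fun _ => cmTV_nonneg _) (cmTV_cmTsum_sub_sum_le μ h)
    (tendsto_tsum_compl_atTop_zero fun i => cmTV (μ i))

lemma cmIntegral_sum (μ : ι → ComplexMeasure α) (F : Finset ι) {f : α → ℂ} (hf : Measurable f)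
    {C : ℝ} (hC : ∀ x, ‖f x‖ ≤ C) :
    cmIntegral (∑ i ∈ F, μ i) f = ∑ i ∈ F, cmIntegral (μ i) f := by
  classical
  induction F using Finset.induction_on with
  | empty => simp [cmIntegral_eq _ hf hC]
  | insert i F hi ih => rw [Finset.sum_insert hi, Finset.sum_insert hi, cmIntegral_add _ _ hf hC, ih]

lemma hasSum_cmIntegral (μ : ι → ComplexMeasure α) (h : Summable fun i => cmTV (μ i)) {f : α → ℂ}
    (hf : Measurable f) (hC : ∀ x, ‖f x‖ ≤ 1) :
    HasSum (fun i => cmIntegral (μ i) f) (cmIntegral (cmTsum μ h) f) := by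
  rw [HasSum, SummationFilter.unconditional_filter, tendsto_iff_norm_sub_tendsto_zero]
  refine squeeze_zero (fun _ => norm_nonneg _) (fun F => ?_) (tendsto_cmTV_cmTsum_sub_sum μ h)
  refine le_trans (le_of_eq ?_) (norm_cmIntegral_le (cmTsum μ h - ∑ i ∈ F, μ i) hf hC)
  rw [norm_sub_rev, ← cmIntegral_sum μ F hf hC]
  congr 1
  rw [sub_eq_iff_eq_add, ← cmIntegral_add _ _ hf hC, sub_add_cancel]

end Series

section NoSingular

variable {d : ℕ}

/-- The **Radon–Nikodym theorem** for complex measures. -/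
lemma withDensityᵥ_rnDeriv_eq_complexMeasure {α : Type*} [MeasurableSpace α] {m : Measure α}
    [SigmaFinite m] {c : ComplexMeasure α} (h : c ≪ᵥ m.toENNRealVectorMeasure) :
    m.withDensityᵥ (c.rnDeriv m) = c := by
  obtain ⟨hre, him⟩ := (ComplexMeasure.absolutelyContinuous_ennreal_iff _ _).1 h
  have hg := c.integrable_rnDeriv m
  ext A hA
  rw [withDensityᵥ_apply hg hA]
  apply Complex.ext
  · rw [← RCLike.re_eq_complex_re, ← integral_re hg.integrableOn, RCLike.re_eq_complex_re]
    have key := congrArg (· A) (SignedMeasure.withDensityᵥ_rnDeriv_eq _ _ hre)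
    simp only [withDensityᵥ_apply (SignedMeasure.integrable_rnDeriv _ _) hA] at key
    exact key
  · rw [← RCLike.im_eq_complex_im, ← integral_im hg.integrableOn, RCLike.im_eq_complex_im]
    have key := congrArg (· A) (SignedMeasure.withDensityᵥ_rnDeriv_eq _ _ him)
    simp only [withDensityᵥ_apply (SignedMeasure.integrable_rnDeriv _ _) hA] at key
    exact key

/-- A complex measure has no singular component iff it vanishes on the Lebesgue null sets that
avoid some fixed countable set. -/
lemma cmNoSingular_iff (μ : ComplexMeasure (EuclideanSpace ℝ (Fin d))) :
    cmNoSingular μ ↔ ∃ S : Set (EuclideanSpace ℝ (Fin d)), S.Countable ∧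
      ∀ A, MeasurableSet A → Disjoint A S → volume A = 0 → μ A = 0 := by
  constructor
  · rintro ⟨g, b, ρ, -, -, h⟩
    refine ⟨Set.range ρ, Set.countable_range ρ, fun A hA hAS hA0 => ?_⟩
    have hz (n : ℕ) : A.indicator (fun _ => b n) (ρ n) = 0 :=
      Set.indicator_of_notMem (fun hn => Set.disjoint_left.1 hAS hn ⟨n, rfl⟩) _
    simp [h A hA, setIntegral_measure_zero g hA0, hz]
  · rintro ⟨S, hS, h⟩
    obtain ⟨ρ, hρ⟩ := (hS.insert 0).exists_eq_range (Set.insert_nonempty 0 S)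
    have hm : MeasurableSet (Set.range ρ) := (Set.countable_range ρ).measurableSet
    have hSρ : S ⊆ Set.range ρ := hρ ▸ Set.subset_insert 0 S
    let D : ℕ → Set (EuclideanSpace ℝ (Fin d)) := disjointed fun n => {ρ n}
    have hDsub (n) : D n ⊆ {ρ n} := disjointed_subset _ n
    have hDm (n) : MeasurableSet (D n) :=
      MeasurableSet.disjointed (fun _ => measurableSet_singleton _) n
    have hDd : Pairwise (Function.onFun Disjoint D) := disjoint_disjointed _
    have hDU : ⋃ n, D n = Set.range ρ := by simp [D, iUnion_disjointed]
    let ν : ComplexMeasure (EuclideanSpace ℝ (Fin d)) := μ.restrict (Set.range ρ)ᶜ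
    have hν {A} (hA : MeasurableSet A) : ν A = μ (A \ Set.range ρ) := by
      rw [VectorMeasure.restrict_apply _ hm.compl hA, Set.sdiff_eq]
    have hac : ν ≪ᵥ volume.toENNRealVectorMeasure := by
      refine VectorMeasure.AbsolutelyContinuous.mk fun A hA hA0 => ?_
      rw [Measure.toENNRealVectorMeasure_apply_measurable hA] at hA0
      rw [hν hA]
      exact h _ (hA.diff hm) (Set.disjoint_left.2 fun x hx hxS => hx.2 (hSρ hxS))
        (measure_mono_null Set.sdiff_subset hA0)
    refine ⟨ComplexMeasure.rnDeriv ν volume, fun n => μ (D n), ρ,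
      ComplexMeasure.integrable_rnDeriv _ _, summable_norm_apply μ hDm hDd, fun A hA => ?_⟩
    have hsplit : μ A = μ (A \ Set.range ρ) + μ (A ∩ Set.range ρ) := by
      rw [← VectorMeasure.of_union (Set.disjoint_sdiff_inter) (hA.diff hm) (hA.inter hm),
        Set.sdiff_union_inter]
    rw [hsplit, ← hν hA]
    congr 1
    · rw [← withDensityᵥ_apply (ComplexMeasure.integrable_rnDeriv _ _) hA,
        withDensityᵥ_rnDeriv_eq_complexMeasure hac]
    · rw [← hDU, Set.inter_iUnion]
      rw [VectorMeasure.of_disjoint_iUnion (fun n => hA.inter (hDm n))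
        fun i j hij => (hDd hij).mono Set.inter_subset_right Set.inter_subset_right]
      refine tsum_congr fun n => ?_
      by_cases hn : ρ n ∈ A
      · rw [Set.indicator_of_mem hn, Set.inter_eq_right.2 ((hDsub n).trans (by simpa using hn))]
      · rw [Set.indicator_of_notMem hn, Set.disjoint_iff_inter_eq_empty.1, VectorMeasure.empty]
        exact Set.disjoint_left.2 fun x hx hxD => hn (hDsub n hxD ▸ hx)

lemma cmNoSingular.smul {μ : ComplexMeasure (EuclideanSpace ℝ (Fin d))} (h : cmNoSingular μ)
    (c : ℂ) : cmNoSingular (c • μ) := by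
  rw [cmNoSingular_iff] at h ⊢
  obtain ⟨S, hS, h⟩ := h
  exact ⟨S, hS, fun A hA hAS hA0 => by simp [h A hA hAS hA0]⟩

lemma cmNoSingular.add {μ ν : ComplexMeasure (EuclideanSpace ℝ (Fin d))} (hμ : cmNoSingular μ)
    (hν : cmNoSingular ν) : cmNoSingular (μ + ν) := by
  rw [cmNoSingular_iff] at hμ hν ⊢
  obtain ⟨S, hS, hμ⟩ := hμ
  obtain ⟨T, hT, hν⟩ := hν
  refine ⟨S ∪ T, hS.union hT, fun A hA hAS hA0 => ?_⟩
  rw [Set.disjoint_union_right] at hAS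
  simp [hμ A hA hAS.1 hA0, hν A hA hAS.2 hA0]

lemma cmNoSingular_cmTsum {ι : Type*} [Countable ι]
    {μ : ι → ComplexMeasure (EuclideanSpace ℝ (Fin d))} (h : Summable fun i => cmTV (μ i))
    (hμ : ∀ i, cmNoSingular (μ i)) : cmNoSingular (cmTsum μ h) := by
  simp only [cmNoSingular_iff] at hμ ⊢
  choose S hS hμ using hμ
  refine ⟨⋃ i, S i, Set.countable_iUnion hS, fun A hA hAS hA0 => ?_⟩
  rw [Set.disjoint_iUnion_right] at hAS
  simp [cmTsum_apply, hμ _ A hA (hAS _) hA0]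

lemma cmNoSingular.cmConv {μ ν : ComplexMeasure (EuclideanSpace ℝ (Fin d))} (hμ : cmNoSingular μ)
    (hν : cmNoSingular ν) : cmNoSingular (cmConv μ ν) := by
  have hvar {μ : ComplexMeasure (EuclideanSpace ℝ (Fin d))} {S : Set (EuclideanSpace ℝ (Fin d))}
      (h : ∀ A, MeasurableSet A → Disjoint A S → volume A = 0 → μ A = 0)
      {A : Set (EuclideanSpace ℝ (Fin d))} (hA : MeasurableSet A) (hAS : Disjoint A S)
      (hA0 : volume A = 0) : μ.variation A = 0 := by
    refine le_antisymm (VectorMeasure.variation_apply_le_of_forall_enorm_le (m := 0) hA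
      fun B hB hBA => ?_) bot_le
    simp [h B hB (hAS.mono_left hBA) (measure_mono_null hBA hA0)]
  rw [cmNoSingular_iff] at hμ hν ⊢
  obtain ⟨S, hS, hμ⟩ := hμ
  obtain ⟨T, hT, hν⟩ := hν
  refine ⟨Set.image2 (· + ·) S T, hS.image2 hT _, fun A hA hAS hA0 => ?_⟩
  have hadd : Measurable fun p : EuclideanSpace ℝ (Fin d) × EuclideanSpace ℝ (Fin d) =>
    p.1 + p.2 := measurable_add
  have hSm : MeasurableSet ((Prod.fst : _ × EuclideanSpace ℝ (Fin d) → _) ⁻¹' S) :=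
    measurable_fst hS.measurableSet
  have hW := hadd hA
  set W := (fun p : EuclideanSpace ℝ (Fin d) × EuclideanSpace ℝ (Fin d) => p.1 + p.2) ⁻¹' A
  have hin : (μ.variation.prod ν.variation) (W ∩ Prod.fst ⁻¹' S) = 0 := by
    rw [Measure.measure_prod_null (hW.inter hSm)]
    refine .of_forall fun x => ?_
    by_cases hx : x ∈ S
    · refine measure_mono_null (t := (x + ·) ⁻¹' A) (fun y hy => hy.1)
        (hvar hν (measurable_const_add x hA) ?_ ?_)
      · exact Set.disjoint_left.2 fun y hy hyT =>
          Set.disjoint_left.1 hAS hy (Set.mem_image2_of_mem hx hyT)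
      · rwa [measure_preimage_add]
    · refine measure_mono_null (t := ∅) (fun y hy => hx hy.2) measure_empty
  have hout : (μ.variation.prod ν.variation) (W \ Prod.fst ⁻¹' S) = 0 := by
    rw [Measure.prod_apply_symm (hW.diff hSm)]
    refine (lintegral_congr fun y => ?_).trans lintegral_zero
    refine measure_mono_null (t := (· + y) ⁻¹' A \ S) (fun x hx => hx)
      (hvar hμ ((measurable_add_const y hA).diff hS.measurableSet) Set.disjoint_sdiff_left
        (measure_mono_null Set.sdiff_subset ?_))
    rwa [measure_preimage_add_right]
  have h0 : (_root_.cmConv μ ν).variation A = 0 := by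
    refine le_antisymm ((variation_cmConv_le μ ν A).trans ?_) bot_le
    rw [Measure.map_apply hadd hA, ← measure_inter_add_sdiff W hSm, hin, hout, add_zero]
  simpa [h0] using VectorMeasure.enorm_measure_le_variation (_root_.cmConv μ ν) A

end NoSingular

section Density

lemma cmIntegral_indicator_one {α : Type*} [MeasurableSpace α] (μ : ComplexMeasure α) {A : Set α}
    (hA : MeasurableSet A) : cmIntegral μ (A.indicator fun _ => 1) = μ A := by
  conv_rhs => rw [← sum_cmPart μ]
  simp [cmIntegral_eq_sum, integral_indicator hA, sum_apply, smul_apply,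
    toComplexMeasure_apply _ hA]

lemma integral_withDensity_ofReal_sub {α : Type*} [MeasurableSpace α] {m : Measure α}
    {u : α → ℝ} (hu : Integrable u m) {f : α → ℂ} (hf : Measurable f) {C : ℝ}
    (hC : ∀ x, ‖f x‖ ≤ C) :
    (∫ x, f x ∂m.withDensity fun x => ENNReal.ofReal (u x)) -
      ∫ x, f x ∂m.withDensity (fun x => ENNReal.ofReal (-u x)) = ∫ x, f x * u x ∂m := by
  have h1 (v : α → ℝ) (hv : Integrable v m) :
      ∫ x, f x ∂m.withDensity (fun x => ENNReal.ofReal (v x)) =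
        ∫ x, f x * ((max (v x) 0 : ℝ) : ℂ) ∂m := by
    rw [integral_withDensity_eq_integral_toReal_smul₀ hv.aemeasurable.ennreal_ofReal
      (.of_forall fun _ => ENNReal.ofReal_lt_top)]
    simp [ENNReal.toReal_ofReal', mul_comm]
  have h2 (v : α → ℝ) (hv : Integrable v m) :
      Integrable (fun x => f x * ((max (v x) 0 : ℝ) : ℂ)) m :=
    hv.pos_part.ofReal.bdd_mul hf.aestronglyMeasurable (.of_forall hC)
  rw [h1 u hu, h1 (fun x => -u x) hu.neg, ← integral_sub (h2 u hu) (h2 (fun x => -u x) hu.neg)]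
  refine integral_congr_ae (.of_forall fun x => ?_)
  simp only [← mul_sub, ← Complex.ofReal_sub]
  congr 2
  rcases le_total (u x) 0 with h | h <;> simp [h]

variable {d : ℕ} {κ : EuclideanSpace ℝ (Fin d) → ℂ}

lemma cmIntegral_cmOfDensity (hκ : Integrable κ) {f : EuclideanSpace ℝ (Fin d) → ℂ}
    (hf : Measurable f) {C : ℝ} (hC : ∀ x, ‖f x‖ ≤ C) :
    cmIntegral (cmOfDensity κ) f = ∫ x, f x * κ x := by
  let m : Fin 4 → Measure (EuclideanSpace ℝ (Fin d)) :=
    ![volume.withDensity fun x => ENNReal.ofReal (κ x).re,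
      volume.withDensity fun x => ENNReal.ofReal (-(κ x).re),
      volume.withDensity fun x => ENNReal.ofReal (κ x).im,
      volume.withDensity fun x => ENNReal.ofReal (-(κ x).im)]
  have hre : Integrable fun x => (κ x).re := hκ.re
  have him : Integrable fun x => (κ x).im := hκ.im
  have hm (i) : IsFiniteMeasure (m i) := by
    fin_cases i
    · exact isFiniteMeasure_withDensity_ofReal hre.2
    · exact isFiniteMeasure_withDensity_ofReal hre.neg.2
    · exact isFiniteMeasure_withDensity_ofReal him.2
    · exact isFiniteMeasure_withDensity_ofReal him.neg.2
  have hdens : cmOfDensity κ = ∑ i, cmCoeff i • Measure.toComplexMeasure (m i) := by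
    ext A hA
    simp [cmOfDensity, Fin.sum_univ_four, cmCoeff, m, smul_apply, add_apply, sub_apply]
    ring
  have h1 := integral_withDensity_ofReal_sub hre hf hC
  have h2 := integral_withDensity_ofReal_sub him hf hC
  have hfκ (u : EuclideanSpace ℝ (Fin d) → ℝ) (hu : Integrable u) :
      Integrable fun x => f x * (u x : ℂ) :=
    hu.ofReal.bdd_mul hf.aestronglyMeasurable (.of_forall hC)
  have h3 : ∫ x, f x * κ x = (∫ x, f x * (κ x).re) + Complex.I * ∫ x, f x * (κ x).im := by
    rw [← integral_const_mul, ← integral_add (hfκ _ hre) ((hfκ _ him).const_mul _)]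
    refine integral_congr_ae (.of_forall fun x => ?_)
    change f x * κ x = _
    nth_rw 1 [← Complex.re_add_im (κ x)]
    ring
  rw [hdens, cmIntegral_sum_smul_toComplexMeasure _ _ hf hC, h3, ← h1, ← h2]
  simp [Fin.sum_univ_four, cmCoeff, m]
  ring

lemma cmOfDensity_eq_withDensityᵥ (hκ : Integrable κ) :
    cmOfDensity κ = volume.withDensityᵥ κ := by
  ext A hA
  rw [withDensityᵥ_apply hκ hA, ← cmIntegral_indicator_one _ hA,
    cmIntegral_cmOfDensity hκ (measurable_const.indicator hA) (C := 1), ← integral_indicator hA]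
  · refine integral_congr_ae (.of_forall fun x => ?_)
    by_cases hx : x ∈ A <;> simp [hx]
  · intro x
    by_cases hx : x ∈ A <;> simp [hx]

lemma cmTV_cmOfDensity (hκ : Integrable κ) : cmTV (cmOfDensity κ) = ∫ x, ‖κ x‖ := by
  rw [cmTV_eq, cmOfDensity_eq_withDensityᵥ hκ, Measure.variation_withDensityᵥ hκ, Measure.real,
    withDensity_apply _ MeasurableSet.univ, Measure.restrict_univ,
    integral_norm_eq_lintegral_enorm hκ.aestronglyMeasurable]

lemma cmNoSingular_cmOfDensity (hκ : Integrable κ) : cmNoSingular (cmOfDensity κ) := by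
  refine ⟨κ, 0, 0, hκ, by simp, fun A hA => ?_⟩
  simp [cmOfDensity_eq_withDensityᵥ hκ, withDensityᵥ_apply hκ hA]

lemma cmPurePoint.cmNoSingular {μ : ComplexMeasure (EuclideanSpace ℝ (Fin d))}
    (h : cmPurePoint μ) : cmNoSingular μ := by
  obtain ⟨b, ρ, hb, h⟩ := h
  exact ⟨0, b, ρ, integrable_zero _ _ _, hb, fun A hA => by simp [h A hA]⟩

lemma cmNoSingular.cmConvPow {μ : ComplexMeasure (EuclideanSpace ℝ (Fin d))}
    (h : cmNoSingular μ) (n : ℕ) : cmNoSingular (cmConvPow μ n) := by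
  induction n with
  | zero =>
    rw [cmNoSingular_iff]
    refine ⟨{0}, Set.countable_singleton 0, fun A hA hA0 _ => ?_⟩
    rw [_root_.cmConvPow, toComplexMeasure_apply _ hA]
    have h0 : (0 : EuclideanSpace ℝ (Fin d)) ∉ A := by simpa using hA0
    simp [Measure.real, hA, h0]
  | succ n ih => exact ih.cmConv h

end Density

section Fourier

variable {d : ℕ}

open scoped RealInnerProductSpace

lemma measurable_fourierKernel (y : EuclideanSpace ℝ (Fin d)) :
    Measurable fun x : EuclideanSpace ℝ (Fin d) =>
      Complex.exp (-2 * Real.pi * Complex.I * (⟪x, y⟫ : ℝ)) :=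
  Continuous.measurable (by fun_prop)

lemma norm_fourierKernel_le (y x : EuclideanSpace ℝ (Fin d)) :
    ‖Complex.exp (-2 * Real.pi * Complex.I * (⟪x, y⟫ : ℝ))‖ ≤ 1 := by
  rw [Complex.norm_exp]
  simp

lemma fourierKernel_add (y x z : EuclideanSpace ℝ (Fin d)) :
    Complex.exp (-2 * Real.pi * Complex.I * (⟪x + z, y⟫ : ℝ)) =
      Complex.exp (-2 * Real.pi * Complex.I * (⟪x, y⟫ : ℝ)) *
        Complex.exp (-2 * Real.pi * Complex.I * (⟪z, y⟫ : ℝ)) := by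
  rw [← Complex.exp_add, inner_add_left]
  push_cast
  ring_nf

lemma cmFourier_add (μ ν : ComplexMeasure (EuclideanSpace ℝ (Fin d)))
    (y : EuclideanSpace ℝ (Fin d)) : cmFourier (μ + ν) y = cmFourier μ y + cmFourier ν y :=
  cmIntegral_add _ _ (measurable_fourierKernel y) (norm_fourierKernel_le y)

lemma cmFourier_smul (c : ℂ) (μ : ComplexMeasure (EuclideanSpace ℝ (Fin d)))
    (y : EuclideanSpace ℝ (Fin d)) : cmFourier (c • μ) y = c * cmFourier μ y :=
  cmIntegral_smul _ _ (measurable_fourierKernel y) (norm_fourierKernel_le y)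

lemma cmFourier_cmConv (μ ν : ComplexMeasure (EuclideanSpace ℝ (Fin d)))
    (y : EuclideanSpace ℝ (Fin d)) : cmFourier (cmConv μ ν) y = cmFourier μ y * cmFourier ν y :=
  cmIntegral_cmConv _ _ (measurable_fourierKernel y) (norm_fourierKernel_le y)
    (fourierKernel_add y)

lemma cmFourier_cmConvPow (μ : ComplexMeasure (EuclideanSpace ℝ (Fin d)))
    (y : EuclideanSpace ℝ (Fin d)) (n : ℕ) : cmFourier (cmConvPow μ n) y = cmFourier μ y ^ n :=
  cmIntegral_cmConvPow _ (measurable_fourierKernel y) (norm_fourierKernel_le y)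
    (fourierKernel_add y) (by simp) n

lemma cmFourier_cmOfDensity {κ : EuclideanSpace ℝ (Fin d) → ℂ} (hκ : Integrable κ)
    (y : EuclideanSpace ℝ (Fin d)) : cmFourier (cmOfDensity κ) y = 𝓕 κ y := by
  rw [cmFourier, cmIntegral_cmOfDensity hκ (measurable_fourierKernel y) (norm_fourierKernel_le y),
    Real.fourier_eq']
  refine integral_congr_ae (.of_forall fun x => ?_)
  simp only [smul_eq_mul]
  congr 2
  push_cast
  ring

lemma hasSum_cmFourier {ι : Type*} (μ : ι → ComplexMeasure (EuclideanSpace ℝ (Fin d)))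
    (h : Summable fun i => cmTV (μ i)) (y : EuclideanSpace ℝ (Fin d)) :
    HasSum (fun i => cmFourier (μ i) y) (cmFourier (cmTsum μ h) y) :=
  hasSum_cmIntegral μ h (measurable_fourierKernel y) (norm_fourierKernel_le y)

end Fourier

end

/-- **Summing up the series of measures.** Let `λ_R, λ_I` be complex measures on `ℝ^d`
without singular components with `‖λ_R‖ < 2ε`, `‖λ_I‖ < 2ε`, let `κ_{p,q} ∈ L¹(ℝ^d)` with
uniformly bounded `L¹` norms, and let `ν_{p,q}` be pure point measures with uniformly
bounded total variations. Then the series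
`ν = Σ_{p,q} (λ_R/3ε)^{*p} * (λ_I/3ε)^{*q} * (κ_{p,q} dx + ν_{p,q})`
converges in total variation norm to a complex measure `ν` of finite total variation
without singular component, and
`ν̂(y) = Σ_{p,q} (λ̂_R(y)/3ε)^p (λ̂_I(y)/3ε)^q (κ̂_{p,q}(y) + ν̂_{p,q}(y))` for all `y`. -/
theorem complexMeasure_series_sum {d : ℕ} (ε : ℝ) (hε : 0 < ε)
    (lR lI : ComplexMeasure (EuclideanSpace ℝ (Fin d)))
    (hlR : cmNoSingular lR) (hlI : cmNoSingular lI)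
    (hlRtv : cmTV lR < 2 * ε) (hlItv : cmTV lI < 2 * ε)
    (κ : ℕ → ℕ → EuclideanSpace ℝ (Fin d) → ℂ)
    (hκ : ∀ p q, Integrable (κ p q))
    (hκbdd : ∃ C : ℝ, ∀ p q, (∫ x, ‖κ p q x‖) ≤ C)
    (νpp : ℕ → ℕ → ComplexMeasure (EuclideanSpace ℝ (Fin d)))
    (hνpp : ∀ p q, cmPurePoint (νpp p q))
    (hνbdd : ∃ C : ℝ, ∀ p q, cmTV (νpp p q) ≤ C) :
    ∃ ν : ComplexMeasure (EuclideanSpace ℝ (Fin d)),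
      cmNoSingular ν ∧
      Tendsto (fun M : ℕ =>
          cmTV (ν - ∑ p ∈ Finset.range M, ∑ q ∈ Finset.range M,
            cmConv (cmConv (cmConvPow ((((3 * ε)⁻¹ : ℝ) : ℂ) • lR) p)
                (cmConvPow ((((3 * ε)⁻¹ : ℝ) : ℂ) • lI) q))
              (cmOfDensity (κ p q) + νpp p q)))
        atTop (𝓝 0) ∧
      ∀ y : EuclideanSpace ℝ (Fin d),
        HasSum (fun pq : ℕ × ℕ =>
            (cmFourier lR y / ((3 * ε : ℝ) : ℂ)) ^ pq.1 *
              (cmFourier lI y / ((3 * ε : ℝ) : ℂ)) ^ pq.2 *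
              (𝓕 (κ pq.1 pq.2) y + cmFourier (νpp pq.1 pq.2) y))
          (cmFourier ν y) := by
  obtain ⟨A, hA⟩ := hκbdd
  obtain ⟨B, hB⟩ := hνbdd
  let c : ℂ := (((3 * ε)⁻¹ : ℝ) : ℂ)
  let μ : ℕ × ℕ → ComplexMeasure (EuclideanSpace ℝ (Fin d)) := fun pq =>
    cmConv (cmConv (cmConvPow (c • lR) pq.1) (cmConvPow (c • lI) pq.2))
      (cmOfDensity (κ pq.1 pq.2) + νpp pq.1 pq.2)
  have hc : ‖c‖ = (3 * ε)⁻¹ := by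
    rw [Complex.norm_real, Real.norm_of_nonneg (by positivity)]
  have hlt {l : ComplexMeasure (EuclideanSpace ℝ (Fin d))} (hl : cmTV l < 2 * ε) :
      cmTV (c • l) < 1 := by
    rw [cmTV_smul, hc, inv_mul_lt_one₀ (by positivity)]
    linarith
  have hsum : Summable fun pq => cmTV (μ pq) := by
    have hgeom : Summable fun pq : ℕ × ℕ =>
        cmTV (c • lR) ^ pq.1 * cmTV (c • lI) ^ pq.2 * (A + B) :=
      ((summable_geometric_of_lt_one (cmTV_nonneg _) (hlt hlRtv)).mul_of_nonneg
        (summable_geometric_of_lt_one (cmTV_nonneg _) (hlt hlItv))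
        (fun _ => pow_nonneg (cmTV_nonneg _) _)
        fun _ => pow_nonneg (cmTV_nonneg _) _).mul_right _
    refine hgeom.of_nonneg_of_le (fun _ => cmTV_nonneg _) fun pq => ?_
    have hAB : cmTV (cmOfDensity (κ pq.1 pq.2) + νpp pq.1 pq.2) ≤ A + B :=
      (cmTV_add_le _ _).trans
        (add_le_add ((cmTV_cmOfDensity (hκ _ _)).trans_le (hA _ _)) (hB _ _))
    refine (cmTV_cmConv_le _ _).trans (mul_le_mul ((cmTV_cmConv_le _ _).trans ?_) hAB
      (cmTV_nonneg _) (mul_nonneg (pow_nonneg (cmTV_nonneg _) _) (pow_nonneg (cmTV_nonneg _) _)))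
    exact mul_le_mul (cmTV_cmConvPow_le _ _) (cmTV_cmConvPow_le _ _) (cmTV_nonneg _)
      (pow_nonneg (cmTV_nonneg _) _)
  refine ⟨cmTsum μ hsum, cmNoSingular_cmTsum hsum fun pq => ?_, ?_, fun y => ?_⟩
  · exact (((hlR.smul c).cmConvPow _).cmConv ((hlI.smul c).cmConvPow _)).cmConv
      ((cmNoSingular_cmOfDensity (hκ _ _)).add (hνpp _ _).cmNoSingular)
  · have hsquares : Tendsto (fun M : ℕ => Finset.range M ×ˢ Finset.range M) atTop atTop :=
      tendsto_atTop_finset_of_monotone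
        (fun m n h => Finset.product_subset_product (Finset.range_mono h) (Finset.range_mono h))
        fun pq => ⟨pq.1 + pq.2 + 1, by simp⟩
    refine ((tendsto_cmTV_cmTsum_sub_sum μ hsum).comp hsquares).congr fun M => ?_
    rw [Function.comp_apply, Finset.sum_product]
  · refine (hasSum_cmFourier μ hsum y).congr_fun fun pq => ?_
    simp only [μ, c, cmFourier_cmConv, cmFourier_cmConvPow, cmFourier_smul, cmFourier_add,
      cmFourier_cmOfDensity (hκ _ _), Complex.ofReal_inv, div_eq_inv_mul]
end
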